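/- arXiv:2206.14224 — 4 statements merged into one kernel-verified Lean document; each statement's English description precedes it below -/
import Mathlib

section
/- Let m ∈ ℕ and k ∈ ℕ with k ≥ 1 and m ≤ k. Then there exists N' ∈ ℕ such that for all N ≥ N' the following holds: for every map e : Q(kN) → Q(kN) there exists s ∈ Q_k^m(kN) such that for all t ∈ Q(kN) with t ≤ s, either e(t) ≤ t or e(t) ≰ s. -/
/-- The coarsening order on partitions (equivalence relations) of `{0,…,n−1}`:
`QLe s t` (written `s ≤ t` in the paper) iff every `s`-class is a union of `t`-classes. -/
def QLe {n : ℕ} (s t : Setoid (Fin n)) : Prop := ∀ i j : Fin n, t i j → s i j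

/-- `Q^m(n)`: the partitions of `{0,…,n−1}` in which `0, 1, …, m−1` belong to
pairwise distinct classes. -/
def Qm {n : ℕ} (m : ℕ) (s : Setoid (Fin n)) : Prop :=
  ∀ i j : Fin n, (i : ℕ) < (j : ℕ) → (j : ℕ) < m → ¬ s i j

/-- `Q_k(kN)`: partitions of `{0,…,kN−1}` into exactly `k` classes, each of size `N`. -/
def Qk (k N : ℕ) (s : Setoid (Fin (k * N))) : Prop :=
  Nat.card (Quotient s) = k ∧ ∀ i : Fin (k * N), {j : Fin (k * N) | s i j}.ncard = N

open Finset in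
lemma bad_card {n k M : ℕ} (rep : Fin k → Fin n) (Ω : Finset (Fin n → Fin k))
    (hΩ : ∀ f, f ∈ Ω ↔ (∀ c, f (rep c) = c) ∧ ∀ c, (univ.filter (fun i => f i = c)).card = M + 2)
    (e : Setoid (Fin n) → Setoid (Fin n)) (p : Setoid (Fin k)) (B : Finset (Fin n → Fin k))
    (hB : ∀ f, f ∈ B ↔ f ∈ Ω ∧ (QLe (e (Setoid.comap f p)) (Setoid.ker f) ∧
      ¬ QLe (e (Setoid.comap f p)) (Setoid.comap f p))) :
    B.card * (M + 1) ≤ Ω.card := by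
  classical
  let R : (Fin n → Fin k) → (Fin n → Fin k) → Prop := fun f f' =>
    ∃ x y, (∀ c, rep c ≠ x) ∧ (∀ c, rep c ≠ y) ∧ p (f x) (f y) ∧
      ¬ (e (Setoid.comap f p)) x y ∧ f' = f ∘ Equiv.swap x y
  have hcomap : ∀ (f : Fin n → Fin k) (x y : Fin n), p (f x) (f y) →
      Setoid.comap (f ∘ Equiv.swap x y) p = Setoid.comap f p := by
    intro f x y hp
    have key : ∀ z, p (f (Equiv.swap x y z)) (f z) := by
      intro z
      rw [Equiv.swap_apply_def]
      split_ifs with h1 h2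
      · subst h1; exact p.symm hp
      · subst h2; exact hp
      · exact p.refl _
    ext i j
    simp only [Setoid.comap_rel, Function.comp]
    exact ⟨fun h => p.trans (p.symm (key i)) (p.trans h (key j)),
      fun h => p.trans (key i) (p.trans h (p.symm (key j)))⟩
  have := Finset.card_mul_le_card_mul (s := B) (t := Ω) (m := M + 1) (n := 1) R ?_ ?_
  · simpa using this
  · intro f hf
    obtain ⟨hfΩ, hle, hnle⟩ := (hB f).1 hf
    obtain ⟨hrep, hcard⟩ := (hΩ f).1 hfΩ
    set E := e (Setoid.comap f p) with hE
    simp only [QLe, not_forall] at hnle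
    obtain ⟨i, j, hij, hnij⟩ := hnle
    rw [Setoid.comap_rel] at hij
    have hle' : ∀ a b, f a = f b → E a b := fun a b h => hle a b h
    have hne : f i ≠ f j := fun h => hnij (hle' _ _ h)
    let F : Fin k → Finset (Fin n) := fun c => (univ.filter (fun i => f i = c)).erase (rep c)
    have hF : ∀ c, (F c).card = M + 1 := by
      intro c
      rw [card_erase_of_mem (by simp [hrep]), hcard]
      rfl
    have hFm : ∀ c x, x ∈ F c → f x = c ∧ ∀ d, rep d ≠ x := by
      intro c x hx
      simp only [F, mem_erase, mem_filter, mem_univ, true_and] at hx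
      refine ⟨hx.2, ?_⟩
      rintro d rfl
      have := hrep d
      rw [hx.2] at this
      exact hx.1 (by rw [this])
    obtain ⟨y, hy⟩ : (F (f j)).Nonempty := by
      rw [← card_pos, hF]; omega
    obtain ⟨hy1, hy2⟩ := hFm _ _ hy
    rw [← hF (f i)]
    apply Finset.card_le_card_of_injOn (fun x => f ∘ Equiv.swap x y)
    · intro x hx
      obtain ⟨hx1, hx2⟩ := hFm _ _ hx
      simp only [coe_bipartiteAbove, Set.mem_setOf_eq]
      refine ⟨?_, x, y, hx2, hy2, ?_, ?_, rfl⟩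
      · rw [hΩ]
        constructor
        · intro c
          simp only [Function.comp]
          rw [Equiv.swap_apply_of_ne_of_ne (hx2 c) (hy2 c), hrep]
        · intro c
          rw [← hcard c]
          apply Finset.card_bij' (fun a _ => Equiv.swap x y a) (fun a _ => Equiv.swap x y a) <;>
            simp
      · rw [hx1, hy1]; exact hij
      · intro h
        exact hnij (E.trans (hle' _ _ hx1.symm) (E.trans h (hle' _ _ hy1)))
    · intro x hx x' hx' hxx
      obtain ⟨hx1, hx2⟩ := hFm _ _ hx
      by_contra hcon
      have h := congrFun hxx x
      have hxy : x ≠ y := by rintro rfl; exact hne (hx1.symm.trans hy1)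
      simp only [Function.comp, Equiv.swap_apply_left] at h
      rw [Equiv.swap_apply_of_ne_of_ne hcon hxy, hy1, hx1] at h
      exact hne h.symm
  · intro f' hf'
    rw [Finset.card_le_one]
    have key : ∀ f ∈ B, R f f' → ∃ x y, x ≠ y ∧ f = f' ∘ Equiv.swap x y ∧
        ∀ z, ¬ (e (Setoid.comap f' p)) z (rep (f' z)) ↔ z = x ∨ z = y := by
      rintro f hf ⟨x, y, hx, hy, hp, hE, rfl⟩
      obtain ⟨hfΩ, hle, -⟩ := (hB f).1 hf
      obtain ⟨hrep, -⟩ := (hΩ f).1 hfΩ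
      rw [hcomap f x y hp]
      set E := e (Setoid.comap f p)
      have hle' : ∀ a, E a (rep (f a)) := fun a => hle a _ (by
        rw [Setoid.ker_def, hrep])
      refine ⟨x, y, ?_, ?_, ?_⟩
      · rintro rfl; exact hE (E.refl _)
      · ext z; simp
      · intro z
        by_cases h1 : z = x
        · subst h1
          simp only [Function.comp, Equiv.swap_apply_left, true_or, iff_true]
          exact fun h => hE (E.trans h (E.symm (hle' y)))
        by_cases h2 : z = y
        · subst h2
          simp only [Function.comp, Equiv.swap_apply_right, or_true, iff_true]
          exact fun h => hE (E.trans (hle' x) (E.symm h))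
        simp only [Function.comp, Equiv.swap_apply_of_ne_of_ne h1 h2, h1, h2, or_self, iff_false,
          not_not]
        exact hle' z
    intro f1 h1 f2 h2
    rw [mem_bipartiteBelow] at h1 h2
    obtain ⟨x1, y1, n1, e1, v1⟩ := key f1 h1.1 h1.2
    obtain ⟨x2, y2, n2, e2, v2⟩ := key f2 h2.1 h2.2
    have hv : ∀ z, (z = x1 ∨ z = y1) ↔ (z = x2 ∨ z = y2) := fun z => (v1 z).symm.trans (v2 z)
    have ha := (hv x1).1 (Or.inl rfl)
    have hb := (hv y1).1 (Or.inr rfl)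
    rw [e1, e2]
    rcases ha with rfl | rfl <;> rcases hb with rfl | rfl
    · exact absurd rfl n1
    · rfl
    · rw [Equiv.swap_comm]
    · exact absurd rfl n1

open Finset in
lemma mod_card (k N : ℕ) (hk : 0 < k) (c : Fin k) :
    (univ.filter (fun i : Fin (k * N) => (⟨i % k, Nat.mod_lt _ hk⟩ : Fin k) = c)).card = N := by
  classical
  have hlt : ∀ j : Fin N, (c : ℕ) + k * j < k * N := by
    intro j
    have := j.2
    have := c.2
    calc (c : ℕ) + k * j < k + k * j := by omega
      _ = k * (j + 1) := by ring
      _ ≤ k * N := Nat.mul_le_mul_left _ j.2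
  conv_rhs => rw [← Fintype.card_fin N, ← Finset.card_univ]
  symm
  apply Finset.card_bij (fun (j : Fin N) _ => (⟨c + k * j, hlt j⟩ : Fin (k * N)))
  · intro j _
    simp [Fin.ext_iff, Nat.mod_eq_of_lt c.2]
  · intro a _ b _ h
    simp only [Fin.mk.injEq, Nat.add_left_cancel_iff] at h
    exact Fin.ext (Nat.eq_of_mul_eq_mul_left hk h)
  · intro i hi
    simp only [mem_filter, mem_univ, true_and] at hi
    refine ⟨⟨i / k, Nat.div_lt_of_lt_mul i.2⟩, mem_univ _, ?_⟩
    subst hi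
    ext
    exact Nat.mod_add_div _ _

/-- Lemma 5.2 (combinatorial lemma, equipartition form): for `m ≤ k`, `k ≥ 1`, there is `N'`
such that for all `N ≥ N'` and every `e : Q(kN) → Q(kN)` there is `s ∈ Q_k^m(kN)` with:
for all `t ≤ s`, either `e(t) ≤ t` or `e(t) ≰ s`. -/
theorem comb_lemma_equipartition (m k : ℕ) (hk : 1 ≤ k) (hmk : m ≤ k) :
    ∃ N' : ℕ, ∀ N ≥ N',
      ∀ e : Setoid (Fin (k * N)) → Setoid (Fin (k * N)),
        ∃ s : Setoid (Fin (k * N)), Qk k N s ∧ Qm m s ∧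
          ∀ t : Setoid (Fin (k * N)), QLe t s → (QLe (e t) t ∨ ¬ QLe (e t) s) := by
  classical
  have : Finite (Setoid (Fin k)) :=
    Finite.of_injective (fun s : Setoid (Fin k) => (fun i j => s i j : Fin k → Fin k → Prop))
      (fun s t h => Setoid.ext fun i j => iff_of_eq (congrFun (congrFun h i) j))
  have := Fintype.ofFinite (Setoid (Fin k))
  refine ⟨Fintype.card (Setoid (Fin k)) + 2, fun N hN e => ?_⟩
  obtain ⟨M, rfl⟩ : ∃ M, N = M + 2 := ⟨N - 2, by omega⟩
  have hkN : k ≤ k * (M + 2) := Nat.le_mul_of_pos_right _ (by omega)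
  let rep : Fin k → Fin (k * (M + 2)) := fun c => ⟨c, c.2.trans_le hkN⟩
  let Ω : Finset (Fin (k * (M + 2)) → Fin k) := Finset.univ.filter fun f =>
    (∀ c, f (rep c) = c) ∧ ∀ c, (Finset.univ.filter (fun i => f i = c)).card = M + 2
  have hΩ : ∀ f, f ∈ Ω ↔ (∀ c, f (rep c) = c) ∧
      ∀ c, (Finset.univ.filter (fun i => f i = c)).card = M + 2 := by
    intro f; simp [Ω]
  let B : Setoid (Fin k) → Finset (Fin (k * (M + 2)) → Fin k) := fun p => Ω.filter fun f =>
    QLe (e (Setoid.comap f p)) (Setoid.ker f) ∧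
      ¬ QLe (e (Setoid.comap f p)) (Setoid.comap f p)
  have hB : ∀ p, (B p).card * (M + 1) ≤ Ω.card := fun p =>
    bad_card rep Ω hΩ e p (B p) (fun f => by simp [B])
  have hpos : 0 < Ω.card := by
    rw [Finset.card_pos]
    refine ⟨fun i => ⟨i % k, Nat.mod_lt _ hk⟩, (hΩ _).2 ⟨?_, fun c => mod_card k (M + 2) hk c⟩⟩
    intro c
    ext
    exact Nat.mod_eq_of_lt c.2
  obtain ⟨f, hf, hgood⟩ : ∃ f ∈ Ω, ∀ p, f ∉ B p := by
    by_contra hcon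
    push Not at hcon
    have h1 : Ω ⊆ Finset.univ.biUnion B := by
      intro f hf
      simpa using hcon f hf
    have h2 : Ω.card ≤ ∑ p, (B p).card :=
      (Finset.card_le_card h1).trans Finset.card_biUnion_le
    have h3 : (∑ p, (B p).card) * (M + 1) ≤ Fintype.card (Setoid (Fin k)) * Ω.card := by
      rw [Finset.sum_mul]
      calc _ ≤ ∑ p : Setoid (Fin k), Ω.card := Finset.sum_le_sum fun p _ => hB p
        _ = _ := by simp
    have h4 : Fintype.card (Setoid (Fin k)) * Ω.card ≤ M * Ω.card :=
      Nat.mul_le_mul_right _ (by omega)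
    nlinarith
  obtain ⟨hrep, hcard⟩ := (hΩ f).1 hf
  refine ⟨Setoid.ker f, ⟨?_, ?_⟩, ?_, ?_⟩
  · rw [Nat.card_congr (Setoid.quotientKerEquivOfSurjective f (fun c => ⟨rep c, hrep c⟩)),
      Nat.card_fin]
  · intro i
    refine Eq.trans ?_ (hcard (f i))
    rw [← Set.ncard_coe_finset]
    congr 1
    ext j
    simp [Setoid.ker_def, eq_comm]
  · intro i j hij hjm h
    rw [Setoid.ker_def] at h
    have hi := hrep ⟨i, by omega⟩
    have hj := hrep ⟨j, by omega⟩
    have : (⟨i, by omega⟩ : Fin k) = ⟨j, by omega⟩ := hi.symm.trans (h.trans hj)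
    simp only [Fin.mk.injEq] at this
    omega
  · intro t ht
    have htp : Setoid.comap f (Setoid.comap rep t) = t := by
      have key : ∀ i, t (rep (f i)) i := fun i => ht _ _ (by rw [Setoid.ker_def, hrep])
      ext i j
      simp only [Setoid.comap_rel]
      exact ⟨fun h => t.trans (t.symm (key i)) (t.trans h (key j)),
        fun h => t.trans (key i) (t.trans h (t.symm (key j)))⟩
    have hg := hgood (Setoid.comap rep t)
    simp only [B, Finset.mem_filter, htp, hf, true_and] at hg
    tauto
end

section
/- For every k ∈ ℕ with k ≥ 1 there exists M ∈ ℕ such that for all N ≥ M and all a₁, a₂, b₁, b₂ ∈ ℕ satisfying 0 ≤ bᵢ ≤ aᵢ ≤ k and aᵢ ≠ 0 for i ∈ {1,2}, one has (a₁N − b₁)! · (a₂N − b₂)! · ((a₁ + a₂) − (b₁ + b₂))! ≤ ((a₁ + a₂)N − (b₁ + b₂))! · (a₁ − b₁)! · (a₂ − b₂)! (equivalently, (a₁N − b₁)!/(a₁ − b₁)! · (a₂N − b₂)!/(a₂ − b₂)! ≤ ((a₁ + a₂)N − (b₁ + b₂))!/((a₁ + a₂) − (b₁ + b₂))!). -/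
theorem fact_aux (p q x : ℕ) (h : p ≤ x) :
    Nat.factorial x * Nat.factorial (p + q) ≤ Nat.factorial (x + q) * Nat.factorial p := by
  induction x, h using Nat.le_induction with
  | base => rw [mul_comm]
  | succ x _ ih =>
    rw [Nat.factorial_succ, show x + 1 + q = (x + q) + 1 by ring, Nat.factorial_succ (x + q),
      mul_assoc, mul_assoc]
    exact Nat.mul_le_mul (by omega) ih

/-- The claim inside Lemma 5.2: for every `k ≥ 1` there is `M` such that for all `N ≥ M` and
all `a₁, a₂, b₁, b₂` with `bᵢ ≤ aᵢ ≤ k` and `aᵢ ≠ 0`,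
`(a₁N−b₁)!/(a₁−b₁)! · (a₂N−b₂)!/(a₂−b₂)! ≤ ((a₁+a₂)N−(b₁+b₂))!/((a₁+a₂)−(b₁+b₂))!`,
stated multiplicatively. -/
theorem factorial_combine_bound (k : ℕ) (hk : 1 ≤ k) :
    ∃ M : ℕ, ∀ N ≥ M, ∀ a₁ a₂ b₁ b₂ : ℕ,
      b₁ ≤ a₁ → a₁ ≤ k → a₁ ≠ 0 → b₂ ≤ a₂ → a₂ ≤ k → a₂ ≠ 0 →
      Nat.factorial (a₁ * N - b₁) * Nat.factorial (a₂ * N - b₂) *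
          Nat.factorial ((a₁ + a₂) - (b₁ + b₂))
        ≤ Nat.factorial ((a₁ + a₂) * N - (b₁ + b₂)) *
            Nat.factorial (a₁ - b₁) * Nat.factorial (a₂ - b₂) := by
  refine ⟨1, fun N hN a₁ a₂ b₁ b₂ h₁ _ _ h₂ _ _ => ?_⟩
  have e₁ : a₁ ≤ a₁ * N := Nat.le_mul_of_pos_right _ hN
  have e₂ : a₂ ≤ a₂ * N := Nat.le_mul_of_pos_right _ hN
  have s₁ : (a₁ + a₂) - (b₁ + b₂) = (a₁ - b₁) + (a₂ - b₂) := by omega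
  have s₂ : (a₁ + a₂) * N - (b₁ + b₂) = (a₁ * N - b₁) + (a₂ * N - b₂) := by
    rw [add_mul]; omega
  rw [s₁, s₂]
  have k₁ : a₁ - b₁ ≤ a₁ * N - b₁ := by omega
  have k₂ : a₂ - b₂ ≤ a₂ * N - b₂ := by omega
  generalize a₁ * N - b₁ = X at *
  generalize a₂ * N - b₂ = Y at *
  generalize a₁ - b₁ = c at *
  generalize a₂ - b₂ = d at *
  have f₁ := fact_aux c d X k₁
  have f₂ := fact_aux d X Y k₂
  rw [add_comm d X, add_comm Y X] at f₂
  calc Nat.factorial X * Nat.factorial Y * Nat.factorial (c + d)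
      = Nat.factorial Y * (Nat.factorial X * Nat.factorial (c + d)) := by ring
    _ ≤ Nat.factorial Y * (Nat.factorial (X + d) * Nat.factorial c) := Nat.mul_le_mul_left _ f₁
    _ = (Nat.factorial Y * Nat.factorial (X + d)) * Nat.factorial c := by ring
    _ ≤ (Nat.factorial (X + Y) * Nat.factorial d) * Nat.factorial c := Nat.mul_le_mul_right _ f₂
    _ = _ := by ring
end

section
/- Let m ≤ k with k ≥ 1, let N ≥ 1, and let t be a partition of {0,…,kN−1} that is a coarsening of some element of Q_k^m(kN). Write t = {X_1, …, X_u} with |X_i| = k_i N (k_i ≥ 1) and set m_i = |X_i ∩ {0,…,m−1}| for each 1 ≤ i ≤ u. Then the number of s ∈ Q_k^m(kN) with t ≤ s equals ∏_{i=1}^{u} (k_i N − m_i)! / ( (N−1)!^{m_i} · N!^{k_i − m_i} · (k_i − m_i)! ). -/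
/-- The size of the class of a partition `t` indexed by `c : Quotient t`. -/
noncomputable def classCard {n : ℕ} (t : Setoid (Fin n)) (c : Quotient t) : ℕ :=
  {x : Fin n | Quotient.mk t x = c}.ncard

/-- `k_i`: the size of the `c`-th class of `t`, divided by `N` (each class of a coarsening of
an equipartition into classes of size `N` has size a multiple of `N`). -/
noncomputable def kIdx {n : ℕ} (t : Setoid (Fin n)) (N : ℕ) (c : Quotient t) : ℕ :=
  classCard t c / N

/-- `m_i`: the number of elements of the `c`-th class of `t` lying in `{0,…,m−1}`. -/
noncomputable def mIdx {n : ℕ} (t : Setoid (Fin n)) (m : ℕ) (c : Quotient t) : ℕ :=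
  {x : Fin n | Quotient.mk t x = c ∧ (x : ℕ) < m}.ncard

open Classical in
/-- Families of blocks of size `N` partitioning `A`, monochromatic for `f`, and each
containing at most one point of `M`. -/
noncomputable def FamS {α ι : Type*} [Fintype α] (f : α → ι) (M : Finset α) (N : ℕ)
    (A : Finset α) : Finset (Finset (Finset α)) :=
  Finset.univ.filter fun P =>
    (∀ x, x ∈ A ↔ ∃ B ∈ P, x ∈ B) ∧
    (∀ B ∈ P, ∀ C ∈ P, ∀ x, x ∈ B → x ∈ C → B = C) ∧
    (∀ B ∈ P, B.card = N) ∧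
    (∀ B ∈ P, ∀ x ∈ B, ∀ y ∈ B, f x = f y) ∧
    (∀ B ∈ P, ∀ x ∈ B, ∀ y ∈ B, x ∈ M → y ∈ M → x = y)

open Classical in
lemma FamS_rec {α ι : Type*} [Fintype α] (f : α → ι) (M : Finset α) (N : ℕ) (hN : 1 ≤ N)
    (A : Finset α) (a : α) (ha : a ∈ A) (haM : a ∈ M ∨ A ∩ M = ∅) :
    FamS f M N A = (Finset.powersetCard (N - 1)
        (((A.filter fun x => f x = f a) \ M).erase a)).biUnion fun T =>
      (FamS f M N (A \ insert a T)).image (insert (insert a T)) := by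
  ext P
  simp only [Finset.mem_biUnion, Finset.mem_powersetCard, Finset.mem_image]
  constructor
  · intro h
    simp only [FamS, Finset.mem_filter, Finset.mem_univ, true_and] at h
    obtain ⟨h1, h2, h3, h4, h5⟩ := h
    obtain ⟨B, hB, haB⟩ := (h1 a).1 ha
    have hins : insert a (B.erase a) = B := Finset.insert_erase haB
    refine ⟨B.erase a, ⟨?_, ?_⟩, P.erase B, ?_, ?_⟩
    · intro x hx
      have hxB := Finset.mem_of_mem_erase hx
      have hxa := Finset.ne_of_mem_erase hx
      have hxA : x ∈ A := (h1 x).2 ⟨B, hB, hxB⟩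
      simp only [Finset.mem_erase, Finset.mem_sdiff, Finset.mem_filter]
      refine ⟨hxa, ⟨hxA, h4 B hB _ hxB _ haB⟩, fun hxM => ?_⟩
      rcases haM with haM | haM
      · exact hxa (h5 B hB _ hxB _ haB hxM haM)
      · have : x ∈ A ∩ M := Finset.mem_inter.2 ⟨hxA, hxM⟩
        rw [haM] at this
        simp at this
    · rw [Finset.card_erase_of_mem haB, h3 B hB]
    · rw [hins]
      simp only [FamS, Finset.mem_filter, Finset.mem_univ, true_and, Finset.mem_sdiff,
        Finset.mem_erase]
      refine ⟨fun x => ⟨?_, ?_⟩, fun C hC D hD => h2 C hC.2 D hD.2, fun C hC => h3 C hC.2,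
        fun C hC => h4 C hC.2, fun C hC => h5 C hC.2⟩
      · rintro ⟨hxA, hxB⟩
        obtain ⟨C, hC, hxC⟩ := (h1 x).1 hxA
        exact ⟨C, ⟨fun e => hxB (e ▸ hxC), hC⟩, hxC⟩
      · rintro ⟨C, ⟨hCB, hC⟩, hxC⟩
        exact ⟨(h1 x).2 ⟨C, hC, hxC⟩, fun hxB => hCB (h2 C hC B hB x hxC hxB)⟩
    · rw [hins, Finset.insert_erase hB]
  · rintro ⟨T, ⟨hT, hTc⟩, P', hP', rfl⟩
    simp only [FamS, Finset.mem_filter, Finset.mem_univ, true_and, Finset.mem_sdiff] at hP' ⊢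
    obtain ⟨h1, h2, h3, h4, h5⟩ := hP'
    have hT' : ∀ x ∈ T, x ≠ a ∧ x ∈ A ∧ f x = f a ∧ x ∉ M := by
      intro x hx
      have := hT hx
      simp only [Finset.mem_erase, Finset.mem_sdiff, Finset.mem_filter] at this
      tauto
    have haT : a ∉ T := fun h => (hT' a h).1 rfl
    have hf : ∀ x ∈ insert a T, f x = f a := by
      intro x hx
      rcases Finset.mem_insert.1 hx with rfl | hx
      · rfl
      · exact (hT' x hx).2.2.1
    have hM : ∀ x ∈ insert a T, x ∈ M → x = a := by
      intro x hx hxM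
      rcases Finset.mem_insert.1 hx with rfl | hx
      · rfl
      · exact absurd hxM (hT' x hx).2.2.2
    have hA : ∀ x ∈ insert a T, x ∈ A := by
      intro x hx
      rcases Finset.mem_insert.1 hx with rfl | hx
      · exact ha
      · exact (hT' x hx).2.1
    have hcard : (insert a T).card = N := by
      rw [Finset.card_insert_of_notMem haT, hTc]; omega
    generalize insert a T = B at *
    have hdis : ∀ C ∈ P', ∀ x ∈ C, x ∉ B := fun C hC x hx => ((h1 x).2 ⟨C, hC, hx⟩).2
    refine ⟨fun x => ⟨fun hx => ?_, ?_⟩, ?_, ?_, ?_, ?_⟩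
    · by_cases hxB : x ∈ B
      · exact ⟨B, by simp, hxB⟩
      · obtain ⟨C, hC, hxC⟩ := (h1 x).1 ⟨hx, hxB⟩
        exact ⟨C, by simp [hC], hxC⟩
    · rintro ⟨C, hC, hxC⟩
      rcases Finset.mem_insert.1 hC with rfl | hC
      · exact hA x hxC
      · exact ((h1 x).2 ⟨C, hC, hxC⟩).1
    · intro C hC D hD x hxC hxD
      rcases Finset.mem_insert.1 hC with hC | hC <;> rcases Finset.mem_insert.1 hD with hD | hD
      · rw [hC, hD]
      · exact absurd (hC ▸ hxC) (hdis D hD x hxD)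
      · exact absurd (hD ▸ hxD) (hdis C hC x hxC)
      · exact h2 C hC D hD x hxC hxD
    · intro C hC
      rcases Finset.mem_insert.1 hC with rfl | hC
      · exact hcard
      · exact h3 C hC
    · intro C hC
      rcases Finset.mem_insert.1 hC with rfl | hC
      · intro x hx y hy
        rw [hf x hx, hf y hy]
      · exact h4 C hC
    · intro C hC
      rcases Finset.mem_insert.1 hC with rfl | hC
      · intro x hx y hy hxM hyM
        rw [hM x hx hxM, hM y hy hyM]
      · exact h5 C hC

open Classical in
lemma FamS_card_rec {α ι : Type*} [Fintype α] (f : α → ι) (M : Finset α) (N : ℕ) (hN : 1 ≤ N)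
    (A : Finset α) (a : α) (ha : a ∈ A) (haM : a ∈ M ∨ A ∩ M = ∅) :
    (FamS f M N A).card = ∑ T ∈ Finset.powersetCard (N - 1)
        (((A.filter fun x => f x = f a) \ M).erase a), (FamS f M N (A \ insert a T)).card := by
  rw [FamS_rec f M N hN A a ha haM, Finset.card_biUnion]
  · refine Finset.sum_congr rfl fun T hT => ?_
    apply Finset.card_image_of_injOn
    have key : ∀ P ∈ FamS f M N (A \ insert a T), insert a T ∉ P := by
      intro P hP hin
      simp only [FamS, Finset.mem_filter, Finset.mem_univ, true_and, Finset.mem_sdiff] at hP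
      exact ((hP.1 a).2 ⟨_, hin, by simp⟩).2 (by simp)
    intro P hP Q hQ h
    have h' : insert (insert a T) P = insert (insert a T) Q := h
    rw [← Finset.erase_insert (key P hP), h', Finset.erase_insert (key Q hQ)]
  · intro T hT U hU hTU
    rw [Function.onFun, Finset.disjoint_left]
    intro P hP hP'
    obtain ⟨P1, h1, rfl⟩ := Finset.mem_image.1 hP
    obtain ⟨P2, h2, h3⟩ := Finset.mem_image.1 hP'
    have hm : insert a T ∈ insert (insert a U) P2 := by rw [h3]; simp
    have haT : a ∉ T := fun h => by simpa using (Finset.mem_powersetCard.1 hT).1 h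
    have haU : a ∉ U := fun h => by simpa using (Finset.mem_powersetCard.1 hU).1 h
    rcases Finset.mem_insert.1 hm with h | h
    · apply hTU
      rw [← Finset.erase_insert haT, h, Finset.erase_insert haU]
    · simp only [FamS, Finset.mem_filter, Finset.mem_univ, true_and, Finset.mem_sdiff] at h2
      exact ((h2.1 a).2 ⟨_, h, by simp⟩).2 (by simp)

open Classical in
lemma FamS_count {α ι : Type*} [Fintype α] [Fintype ι] (f : α → ι) (M : Finset α) (N : ℕ)
    (hN : 1 ≤ N) (n : ℕ) : ∀ (A : Finset α) (_ : A.card = n) (kk mm : ι → ℕ)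
    (_ : ∀ c, (A.filter fun x => f x = c).card = kk c * N)
    (_ : ∀ c, ((A ∩ M).filter fun x => f x = c).card = mm c)
    (_ : ∀ c, mm c ≤ kk c),
    (FamS f M N A).card * (∏ c, ((N - 1).factorial ^ (mm c) *
      N.factorial ^ (kk c - mm c) * (kk c - mm c).factorial))
      = ∏ c, (kk c * N - mm c).factorial := by
  induction n using Nat.strong_induction_on with
  | _ n ih =>
  intro A hAn kk mm hkk hmm hle
  rcases A.eq_empty_or_nonempty with rfl | hne
  · have hk0 : ∀ c, kk c = 0 := by
      intro c
      have := hkk c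
      simp at this
      rcases this with h | h
      · exact h
      · omega
    have hm0 : ∀ c, mm c = 0 := fun c => by have := hle c; have := hk0 c; omega
    have : FamS f M N ∅ = {∅} := by
      ext P
      simp only [FamS, Finset.mem_filter, Finset.mem_univ, true_and, Finset.mem_singleton]
      constructor
      · rintro ⟨h1, -, h3, -⟩
        rw [Finset.eq_empty_iff_forall_notMem]
        intro B hB
        have hc := h3 B hB
        obtain ⟨x, hx⟩ := Finset.card_pos.1 (by omega : 0 < B.card)
        simpa using (h1 x).2 ⟨B, hB, hx⟩
      · rintro rfl
        simp
    simp [this, hk0, hm0]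
  · obtain ⟨a, ha, haM⟩ : ∃ a ∈ A, a ∈ M ∨ A ∩ M = ∅ := by
      rcases (A ∩ M).eq_empty_or_nonempty with h | ⟨a, h⟩
      · exact hne.imp fun a ha => ⟨ha, Or.inr h⟩
      · exact ⟨a, (Finset.mem_inter.1 h).1, Or.inl (Finset.mem_inter.1 h).2⟩
    set c0 := f a with hc0
    set W := ((A.filter fun x => f x = c0) \ M).erase a with hW
    let e : ℕ := if a ∈ M then 1 else 0
    have hkpos : 1 ≤ kk c0 := by
      by_contra hcon
      have h0 : kk c0 = 0 := by omega
      have := hkk c0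
      rw [h0, zero_mul, Finset.card_eq_zero] at this
      have h : a ∈ A.filter fun x => f x = c0 := by simp [ha, hc0]
      rw [this] at h
      simp at h
    have hme : e ≤ mm c0 := by
      by_cases h : a ∈ M
      · simp only [e, h, if_true]
        rw [← hmm c0]
        exact Finset.card_pos.2 ⟨a, by simp [ha, h, hc0]⟩
      · simp [e, h]
    have hm0 : a ∉ M → mm c0 = 0 := by
      intro h
      rw [← hmm c0, haM.resolve_left h]; simp
    have hWc : W.card = kk c0 * N - mm c0 - (1 - e) := by
      have h1 : ((A.filter fun x => f x = c0) \ M).card = kk c0 * N - mm c0 := by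
        rw [Finset.card_sdiff, hkk, ← hmm c0]
        congr 2
        ext x; simp; tauto
      by_cases h : a ∈ M
      · rw [hW, Finset.erase_eq_of_notMem (by simp [h]), h1]; simp [e, h]
      · rw [hW, Finset.card_erase_of_mem (by simp [h, ha, hc0]), h1]; simp [e, h]
    let kk' := Function.update kk c0 (kk c0 - 1)
    let mm' := Function.update mm c0 (mm c0 - e)
    have hle0 := hle c0
    have key : ∀ T ∈ Finset.powersetCard (N - 1) W,
        (FamS f M N (A \ insert a T)).card * (∏ c, ((N - 1).factorial ^ (mm' c) *
      N.factorial ^ (kk' c - mm' c) * (kk' c - mm' c).factorial))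
      = ∏ c, (kk' c * N - mm' c).factorial := by
      intro T hT
      obtain ⟨hTW, hTc⟩ := Finset.mem_powersetCard.1 hT
      have hT' : ∀ x ∈ T, x ≠ a ∧ x ∈ A ∧ f x = f a ∧ x ∉ M := by
        intro x hx
        have := hTW hx
        simp only [hW, Finset.mem_erase, Finset.mem_sdiff, Finset.mem_filter] at this
        tauto
      have haT : a ∉ T := fun h => (hT' a h).1 rfl
      have hsub : insert a T ⊆ A.filter fun x => f x = c0 := by
        intro x hx
        rcases Finset.mem_insert.1 hx with rfl | hx
        · simp [ha, hc0]
        · simp [hT' x hx, hc0]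
      have hcard : (insert a T).card = N := by
        rw [Finset.card_insert_of_notMem haT, hTc]; omega
      have hsubA : insert a T ⊆ A := hsub.trans (Finset.filter_subset _ _)
      refine ih _ ?_ (A \ insert a T) rfl kk' mm' ?_ ?_ ?_
      · rw [Finset.card_sdiff_of_subset hsubA, hcard]
        have := Finset.card_le_card hsubA
        omega
      · intro c
        by_cases hc : c = c0
        · subst hc
          have : (A \ insert a T).filter (fun x => f x = c0) =
            (A.filter fun x => f x = c0) \ insert a T := by
            ext x; simp only [Finset.mem_filter, Finset.mem_sdiff]; tauto
          rw [this, Finset.card_sdiff_of_subset hsub, hcard, hkk]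
          simp [kk', Nat.sub_mul]
        · simp only [kk', Function.update_of_ne hc]
          rw [← hkk c]
          congr 1
          ext x
          simp only [Finset.mem_filter, Finset.mem_sdiff]
          refine ⟨fun h => ⟨h.1.1, h.2⟩, fun h => ⟨⟨h.1, fun hx => hc ?_⟩, h.2⟩⟩
          rw [← h.2]; exact (Finset.mem_filter.1 (hsub hx)).2
      · intro c
        by_cases hc : c = c0
        · subst hc
          have : ((A \ insert a T) ∩ M).filter (fun x => f x = c0) =
            ((A ∩ M).filter fun x => f x = c0).erase a := by
            ext x
            simp only [Finset.mem_filter, Finset.mem_sdiff, Finset.mem_inter, Finset.mem_erase,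
              Finset.mem_insert]
            have := hT' x
            tauto
          rw [this]
          by_cases h : a ∈ M
          · rw [Finset.card_erase_of_mem (by simp [ha, h, hc0]), hmm]; simp [mm', e, h]
          · rw [Finset.erase_eq_of_notMem (by simp [h]), hmm]; simp [mm', e, h]
        · simp only [mm', Function.update_of_ne hc]
          rw [← hmm c]
          congr 1
          ext x
          simp only [Finset.mem_filter, Finset.mem_sdiff, Finset.mem_inter]
          refine ⟨fun h => ⟨⟨h.1.1.1, h.1.2⟩, h.2⟩,
            fun h => ⟨⟨⟨h.1.1, fun hx => hc ?_⟩, h.1.2⟩, h.2⟩⟩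
          rw [← h.2]; exact (Finset.mem_filter.1 (hsub hx)).2
      · intro c
        by_cases hc : c = c0
        · subst hc
          simp only [mm', kk', Function.update_self]
          by_cases h : a ∈ M
          · simp only [e, h, if_true]; omega
          · have := hm0 h; omega
        · simp only [mm', kk', Function.update_of_ne hc]; exact hle c
    have hsum := Finset.sum_congr rfl key
    rw [← Finset.sum_mul, ← FamS_card_rec f M N hN A a ha haM, Finset.sum_const,
      Finset.card_powersetCard, hWc, smul_eq_mul] at hsum
    rw [← Finset.mul_prod_erase _ _ (Finset.mem_univ c0)] at hsum
    rw [← Finset.mul_prod_erase _ (fun c => (kk' c * N - mm' c).factorial)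
      (Finset.mem_univ c0)] at hsum
    rw [← Finset.mul_prod_erase _ _ (Finset.mem_univ c0)]
    rw [← Finset.mul_prod_erase _ (fun c => (kk c * N - mm c).factorial) (Finset.mem_univ c0)]
    have e1 : ∏ c ∈ Finset.univ.erase c0, ((N - 1).factorial ^ (mm' c) *
        N.factorial ^ (kk' c - mm' c) * (kk' c - mm' c).factorial) =
        ∏ c ∈ Finset.univ.erase c0, ((N - 1).factorial ^ (mm c) *
        N.factorial ^ (kk c - mm c) * (kk c - mm c).factorial) := by
      refine Finset.prod_congr rfl fun c hc => ?_
      have hc := Finset.ne_of_mem_erase hc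
      simp only [mm', kk', Function.update_of_ne hc]
    have e2 : ∏ c ∈ Finset.univ.erase c0, (kk' c * N - mm' c).factorial =
        ∏ c ∈ Finset.univ.erase c0, (kk c * N - mm c).factorial := by
      refine Finset.prod_congr rfl fun c hc => ?_
      have hc := Finset.ne_of_mem_erase hc
      simp only [mm', kk', Function.update_of_ne hc]
    rw [e1, e2] at hsum
    simp only [mm', kk', Function.update_self] at hsum
    generalize (∏ c ∈ Finset.univ.erase c0, ((N - 1).factorial ^ (mm c) *
        N.factorial ^ (kk c - mm c) * (kk c - mm c).factorial)) = R at *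
    generalize (∏ c ∈ Finset.univ.erase c0, (kk c * N - mm c).factorial) = R2 at *
    generalize (FamS f M N A).card = F at *
    clear key e1 e2
    generalize kk c0 = K at *
    generalize mm c0 = m at *
    obtain ⟨K, rfl⟩ : ∃ K', K = K' + 1 := ⟨K - 1, by omega⟩
    obtain ⟨L, rfl⟩ : ∃ L, N = L + 1 := ⟨N - 1, by omega⟩
    by_cases h : a ∈ M
    · simp only [e, h, if_true] at hsum hme
      obtain ⟨m, rfl⟩ : ∃ m', m = m' + 1 := ⟨m - 1, by omega⟩
      simp only [Nat.add_sub_cancel, Nat.sub_self, Nat.sub_zero, Nat.add_sub_add_right] at hsum ⊢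
      have hmK : m ≤ K * (L + 1) := by nlinarith
      have hx : (K + 1) * (L + 1) - (m + 1) = (K * (L + 1) - m) + L := by
        rw [Nat.succ_mul]; omega
      rw [hx] at hsum ⊢
      have hch := Nat.add_choose_mul_factorial_mul_factorial (K * (L + 1) - m) L
      rw [← hch, pow_succ]
      linear_combination L.factorial * hsum
    · have hm := hm0 h
      subst hm
      simp only [e, h, if_false, Nat.add_sub_cancel, Nat.sub_zero, pow_zero, one_mul] at hsum ⊢
      have hx : (K + 1) * (L + 1) = (K * (L + 1) + L) + 1 := by ring
      rw [hx] at hsum ⊢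
      rw [Nat.add_sub_cancel] at hsum
      have hch := Nat.add_choose_mul_factorial_mul_factorial (K * (L + 1)) L
      have hL := Nat.factorial_succ L
      rw [Nat.factorial_succ (K * (L + 1) + L), ← hch, pow_succ, Nat.factorial_succ K]
      linear_combination (L + 1).factorial * (K + 1) * hsum +
        (K + 1) * (K * (L + 1) + L).choose L * (K * (L + 1)).factorial * R2 * hL

/-- The counting formula from the proof of Lemma 5.2: if `t` is a coarsening of some element
of `Q_k^m(kN)`, with classes `X_i` of sizes `k_i N` and `m_i = |X_i ∩ {0,…,m−1}|`, then
`|{s ∈ Q_k^m(kN) : t ≤ s}| = ∏_i (k_i N − m_i)! / ((N−1)!^{m_i} · N!^{k_i−m_i} · (k_i−m_i)!)`,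
stated multiplicatively. -/
theorem count_finer_equipartitions (m k N : ℕ) (hk : 1 ≤ k) (hmk : m ≤ k) (hN : 1 ≤ N)
    (t : Setoid (Fin (k * N)))
    (ht : ∃ s₀ : Setoid (Fin (k * N)), Qk k N s₀ ∧ Qm m s₀ ∧ QLe t s₀) :
    {s : Setoid (Fin (k * N)) | (Qk k N s ∧ Qm m s) ∧ QLe t s}.ncard *
        (∏ᶠ c : Quotient t,
          (Nat.factorial (N - 1)) ^ (mIdx t m c) *
            (Nat.factorial N) ^ (kIdx t N c - mIdx t m c) *
            Nat.factorial (kIdx t N c - mIdx t m c))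
      = ∏ᶠ c : Quotient t, Nat.factorial (kIdx t N c * N - mIdx t m c) := by
  classical
  have hsizes : ∃ kk : Quotient t → ℕ,
      (∀ c, (Finset.univ.filter fun x => Quotient.mk t x = c).card = kk c * N) ∧
      ∀ c, ((Finset.univ ∩ Finset.univ.filter fun x : Fin (k * N) => (x : ℕ) < m).filter
        fun x => Quotient.mk t x = c).card ≤ kk c := by
    obtain ⟨s₀, hk0, hm0, hle0⟩ := ht
    refine ⟨fun c => ((Finset.univ.filter fun x => Quotient.mk t x = c).image
      (Quotient.mk s₀)).card, fun c => ?_, fun c => ?_⟩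
    · rw [Finset.card_eq_sum_card_image (Quotient.mk s₀)]
      apply Finset.sum_const_nat
      intro q hq
      obtain ⟨x, hx, rfl⟩ := Finset.mem_image.1 hq
      refine Eq.trans ?_ (hk0.2 x)
      rw [Set.ncard_eq_toFinset_card']
      congr 1
      ext y
      simp only [Finset.mem_filter, Finset.mem_univ, true_and, Set.mem_toFinset,
        Set.mem_ofPred_eq] at hx ⊢
      constructor
      · rintro ⟨-, h⟩
        exact s₀.symm (Quotient.exact h)
      · intro h
        refine ⟨?_, Quotient.sound (s₀.symm h)⟩
        rw [← hx]
        exact Quotient.sound (t.symm (hle0 _ _ h))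
    · refine Finset.card_le_card_of_injOn (Quotient.mk s₀) ?_ ?_
      · intro x hx
        simp only [Finset.coe_filter, Set.mem_ofPred_eq] at hx
        exact Finset.mem_coe.2 (Finset.mem_image_of_mem _ (by simp [hx.2]))
      · intro x hx y hy h
        simp only [Finset.coe_filter, Set.mem_ofPred_eq, Finset.univ_inter, Finset.mem_filter,
          Finset.mem_univ, true_and] at hx hy
        have hs : s₀ x y := Quotient.exact h
        rcases lt_trichotomy (x : ℕ) y with hlt | heq | hlt
        · exact absurd hs (hm0 _ _ hlt hy.1)
        · exact Fin.ext heq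
        · exact absurd (s₀.symm hs) (hm0 _ _ hlt hx.1)
  obtain ⟨kk, hkk, hmm⟩ := hsizes
  have hkI : ∀ c, kIdx t N c = kk c := by
    intro c
    rw [kIdx, classCard, Set.ncard_eq_toFinset_card']
    have : ({x | Quotient.mk t x = c} : Set (Fin (k * N))).toFinset =
      Finset.univ.filter fun x => Quotient.mk t x = c := by ext; simp
    rw [this, hkk, Nat.mul_div_cancel _ hN]
  have hmI : ∀ c, ((Finset.univ ∩ Finset.univ.filter fun x : Fin (k * N) => (x : ℕ) < m).filter
        fun x => Quotient.mk t x = c).card = mIdx t m c := by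
    intro c
    rw [mIdx, Set.ncard_eq_toFinset_card']
    congr 1
    ext x
    simp [and_comm]
  have main := FamS_count (Quotient.mk t) (Finset.univ.filter fun x : Fin (k * N) => (x : ℕ) < m)
    N hN _ Finset.univ rfl kk (mIdx t m)
    (fun c => by convert hkk c) (fun c => by convert hmI c) (fun c => hmI c ▸ hmm c)
  rw [finprod_eq_prod_of_fintype, finprod_eq_prod_of_fintype]
  simp only [hkI]
  rw [← main]
  congr 1
  rw [← Set.ncard_coe_finset]
  refine Set.ncard_congr (fun s _ => Finset.univ.image fun x => Finset.univ.filter fun y => s x y)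
    ?_ ?_ ?_
  · rintro s ⟨⟨⟨-, hc⟩, hm⟩, hle⟩
    simp only [FamS, Finset.coe_filter, Set.mem_ofPred_eq, Finset.mem_univ, true_and,
      Finset.mem_image, exists_exists_eq_and, forall_exists_index, forall_apply_eq_imp_iff,
      Finset.mem_filter, true_iff]
    refine ⟨fun x => ⟨x, s.refl x⟩, ?_, ?_, ?_, ?_⟩
    · intro x y z hx hy
      ext w
      simp only [Finset.mem_filter, Finset.mem_univ, true_and]
      have hxy : s x y := s.trans hx (s.symm hy)
      exact ⟨fun h => s.trans (s.symm hxy) h, fun h => s.trans hxy h⟩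
    · intro x
      refine Eq.trans ?_ (hc x)
      rw [Set.ncard_eq_toFinset_card']
      congr 1
      ext y
      simp
    · intro x y hy z hz
      exact Quotient.sound (hle _ _ (s.trans (s.symm hy) hz))
    · intro x y hy z hz hym hzm
      have hs : s y z := s.trans (s.symm hy) hz
      rcases lt_trichotomy (y : ℕ) z with hlt | heq | hlt
      · exact absurd hs (hm _ _ hlt hzm)
      · exact Fin.ext heq
      · exact absurd (s.symm hs) (hm _ _ hlt hym)
  · intro s s' _ _ h
    have key : ∀ s s' : Setoid (Fin (k * N)),
        (Finset.univ.image fun x => Finset.univ.filter fun y => s x y) =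
        (Finset.univ.image fun x => Finset.univ.filter fun y => s' x y) →
        ∀ x y, s x y → s' x y := by
      intro s s' h x y hxy
      have hx : (Finset.univ.filter fun y => s x y) ∈
          (Finset.univ.image fun x => Finset.univ.filter fun y => s' x y) := by
        rw [← h]; exact Finset.mem_image_of_mem _ (Finset.mem_univ x)
      obtain ⟨z, -, hz⟩ := Finset.mem_image.1 hx
      have h1 : s' z x := by
        have : x ∈ Finset.univ.filter fun y => s x y := by simpa using s.refl x
        rw [← hz] at this
        simpa using this
      have h2 : s' z y := by
        have : y ∈ Finset.univ.filter fun y => s x y := by simpa using hxy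
        rw [← hz] at this
        simpa using this
      exact s'.trans (s'.symm h1) h2
    exact Setoid.ext fun x y => ⟨key s s' h x y, key s' s h.symm x y⟩
  · intro P hP
    simp only [FamS, Finset.coe_filter, Set.mem_ofPred_eq, Finset.mem_univ, true_and,
      Finset.mem_filter, true_iff] at hP
    obtain ⟨h1, h2, h3, h4, h5⟩ := hP
    choose B hB hxB using h1
    have hBu : ∀ x, ∀ C ∈ P, x ∈ C → C = B x := fun x C hC hx => h2 C hC _ (hB x) x hx (hxB x)
    have hiff : ∀ x y, B x = B y ↔ y ∈ B x :=
      fun x y => ⟨fun h => h ▸ hxB y, fun h => hBu y _ (hB x) h⟩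
    let s : Setoid (Fin (k * N)) := Setoid.ker B
    have hs : ∀ x y, s x y ↔ y ∈ B x := fun x y => by rw [← hiff]; exact Iff.rfl
    have hcl : ∀ x, (Finset.univ.filter fun y => s x y) = B x := by
      intro x; ext y
      simp only [Finset.mem_filter, Finset.mem_univ, true_and]
      exact hs x y
    have hcard : ∀ i : Fin (k * N), {j : Fin (k * N) | s i j}.ncard = N := by
      intro x
      refine Eq.trans ?_ (h3 _ (hB x))
      rw [← Set.ncard_coe_finset]
      congr 1
      ext y
      exact hs x y
    refine ⟨s, ⟨⟨⟨?_, hcard⟩, ?_⟩, ?_⟩, ?_⟩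
    · have hsum := Finset.card_eq_sum_card_fiberwise (s := (Finset.univ : Finset (Fin (k * N))))
        (t := (Finset.univ : Finset (Quotient s))) (f := Quotient.mk s) (by simp [Set.MapsTo])
      have hf : ∀ q ∈ (Finset.univ : Finset (Quotient s)),
          (Finset.univ.filter fun x => Quotient.mk s x = q).card = N := by
        intro q _
        induction q using Quotient.inductionOn with
        | _ x =>
        refine Eq.trans ?_ (h3 _ (hB x))
        congr 1
        ext y
        simp only [Finset.mem_filter, Finset.mem_univ, true_and, ← hs]
        exact ⟨fun h => s.symm (Quotient.exact h), fun h => Quotient.sound (s.symm h)⟩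
      rw [Finset.sum_congr rfl hf] at hsum
      simp only [Finset.card_univ, Fintype.card_fin, Finset.sum_const, smul_eq_mul] at hsum
      rw [Nat.card_eq_fintype_card]
      exact (Nat.eq_of_mul_eq_mul_right hN hsum).symm
    · intro i j hij hj hsij
      have := h5 _ (hB i) i (hxB i) j ((hs i j).1 hsij) (by omega) (by omega)
      rw [this] at hij
      exact lt_irrefl _ hij
    · intro i j hij
      exact Quotient.exact (h4 _ (hB i) i (hxB i) j ((hs i j).1 hij))
    · simp only [hcl]
      ext C
      simp only [Finset.mem_image, Finset.mem_univ, true_and]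
      constructor
      · rintro ⟨x, rfl⟩
        exact hB x
      · intro hC
        obtain ⟨x, hx⟩ := Finset.card_pos.1 (by rw [h3 C hC]; omega : 0 < C.card)
        exact ⟨x, (hBu x C hC hx).symm⟩
end

section
/- Let E be a countable Borel equivalence relation on the Milliken space S_∞(2^{<ℕ}) of strong subtrees of 2^{<ℕ}. Then there exists a Ramsey conull set 𝓓 ⊆ S_∞(2^{<ℕ}) such that for all B ∈ 𝓓 and all A, A' ∈ S_∞(2^{<ℕ}) with A ≤ B and A' ≤ B, one has A E A' if and only if A = A'. -/
/-- The `ℓ`-th splitting level (height) of a subset `A` of the full binary tree `2^{<ℕ}`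
(finite binary strings, modelled as `List Bool`): the `ℓ`-th smallest length of a member
of `A`. -/
noncomputable def levelOf (A : Set (List Bool)) (ℓ : ℕ) : ℕ :=
  Nat.nth (fun h => ∃ a ∈ A, a.length = h) ℓ

/-- `A` is an (infinite) strong subtree of `2^{<ℕ}`: there is a strictly increasing sequence
`k₀ < k₁ < ⋯` such that `A` is partitioned into its level sets `A(ℓ) = A ∩ 2^{k_ℓ}`,
`A(0)` is a singleton (the root), every `a ∈ A(ℓ)` and `i ∈ {0,1}` admit exactly one
`b ∈ A(ℓ+1)` extending `a⌢i`, and every member of `A(ℓ+1)` arises this way. -/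
def IsStrongSubtree (A : Set (List Bool)) : Prop :=
  ∃ k : ℕ → ℕ, StrictMono k ∧
    (∀ a ∈ A, ∃ ℓ, a.length = k ℓ) ∧
    (∃! a, a ∈ A ∧ a.length = k 0) ∧
    (∀ ℓ : ℕ, ∀ a ∈ A, a.length = k ℓ → ∀ i : Bool,
      ∃! b, b ∈ A ∧ b.length = k (ℓ + 1) ∧ (a ++ [i]) <+: b) ∧
    (∀ ℓ : ℕ, ∀ b ∈ A, b.length = k (ℓ + 1) →
      ∃ a ∈ A, a.length = k ℓ ∧ ∃ i : Bool, (a ++ [i]) <+: b)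

/-- The Milliken space `S_∞(2^{<ℕ})` of all strong subtrees of `2^{<ℕ}`, viewed as a subset of
the Polish space `2^{2^{<ℕ}}` with the induced Borel structure. -/
def Sinf : Type := {A : Set (List Bool) // IsStrongSubtree A}

instance : MeasurableSpace Sinf :=
  inferInstanceAs (MeasurableSpace {A : Set (List Bool) // IsStrongSubtree A})

/-- The finite approximation `r_n(A) = A(0) ∪ ⋯ ∪ A(n−1)`: members of `A` of height among
the first `n` levels of `A`. -/
noncomputable def approxT (A : Set (List Bool)) (n : ℕ) : Set (List Bool) :=
  {a ∈ A | ∃ ℓ < n, a.length = levelOf A ℓ}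

/-- `s ⊑ A`: `s = r_n(A)` for some `n`. -/
def InitSegT (s A : Set (List Bool)) : Prop := ∃ n, s = approxT A n

/-- The Ellentuck cube `[s, A] = {B ∈ S_∞(2^{<ℕ}) : s ⊑ B and B ⊆ A}`. -/
def cubeT (s : Set (List Bool)) (A : Sinf) : Set Sinf :=
  {B | InitSegT s B.1 ∧ B.1 ⊆ A.1}

/-- `𝓧 ⊆ S_∞(2^{<ℕ})` is Ramsey null. -/
def RamseyNullT (X : Set Sinf) : Prop :=
  ∀ s A, (cubeT s A).Nonempty → ∃ B ∈ cubeT s A, cubeT s B ∩ X = ∅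

/-- `𝓧 ⊆ S_∞(2^{<ℕ})` is Ramsey conull. -/
def RamseyConullT (X : Set Sinf) : Prop := RamseyNullT Xᶜ


/-- Strong embeddings of the full binary tree into itself. -/
@[ext] structure SE where
  f : List Bool → List Bool
  lev : ∀ x y, x.length = y.length → (f x).length = (f y).length
  step : ∀ x i, (f x ++ [i]) <+: f (x ++ [i])

namespace SE

instance : CoeFun SE (fun _ => List Bool → List Bool) := ⟨SE.f⟩

theorem step_prefix (α : SE) {x y : List Bool} {i : Bool} (h : (x ++ [i]) <+: y) :
    (α x ++ [i]) <+: α y := by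
  obtain ⟨t, rfl⟩ := h
  induction t using List.reverseRecOn with
  | nil => simpa using α.step x i
  | append_singleton t j ih =>
    refine ih.trans ?_
    have := α.step (x ++ [i] ++ t) j
    rw [← List.append_assoc]
    exact (List.prefix_append _ _).trans this

theorem mono (α : SE) {x y : List Bool} (h : x <+: y) : α x <+: α y := by
  obtain ⟨t, rfl⟩ := h
  cases t with
  | nil => simp
  | cons i t =>
    have : (x ++ [i]) <+: x ++ i :: t := ⟨t, by simp⟩
    exact (List.prefix_append _ _).trans (α.step_prefix this)

/-- Level function. -/
def lv (α : SE) (n : ℕ) : ℕ := (α (List.replicate n false)).length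

theorem length_eq (α : SE) (x : List Bool) : (α x).length = α.lv x.length :=
  α.lev _ _ (by simp)

theorem lv_succ (α : SE) (n : ℕ) : α.lv n < α.lv (n + 1) := by
  have h := (α.step (List.replicate n false) false).length_le
  rw [α.length_eq (_ ++ _)] at h
  simp at h
  exact h

theorem lv_strictMono (α : SE) : StrictMono α.lv := strictMono_nat_of_lt_succ α.lv_succ

theorem le_lv (α : SE) (n : ℕ) : n ≤ α.lv n := α.lv_strictMono.le_apply

theorem length_le (α : SE) (x : List Bool) : x.length ≤ (α x).length := by
  rw [length_eq]; exact α.le_lv _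

theorem split_diff {p q : List Bool} (hl : p.length = q.length) (hne : p ≠ q) :
    ∃ c i, (c ++ [i]) <+: p ∧ (c ++ [!i]) <+: q := by
  induction p generalizing q with
  | nil => cases q <;> simp_all
  | cons a p ih =>
    cases q with
    | nil => simp at hl
    | cons b q =>
      by_cases hab : a = b
      · subst hab
        obtain ⟨c, i, h1, h2⟩ := ih (by simpa using hl) (by simpa using hne)
        exact ⟨a :: c, i, by simpa using h1, by simpa using h2⟩
      · refine ⟨[], a, by simp, ?_⟩
        have : b = !a := by cases a <;> cases b <;> simp_all
        simp [this]

theorem prefix_diff {c y : List Bool} {i : Bool} (h1 : (c ++ [i]) <+: y)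
    (h2 : (c ++ [!i]) <+: y) : False := by
  have := List.prefix_of_prefix_length_le h1 h2 (by simp)
  have := this.eq_of_length (by simp)
  simp at this

theorem inj (α : SE) : Function.Injective α := by
  intro x y h
  have hl : x.length = y.length := by
    apply α.lv_strictMono.injective
    rw [← length_eq, ← length_eq, h]
  by_contra hne
  obtain ⟨c, i, h1, h2⟩ := split_diff hl hne
  have h1 := α.step_prefix h1
  have h2 := α.step_prefix h2
  rw [h] at h1
  exact prefix_diff h1 h2

instance : One SE := ⟨⟨fun x => x, fun _ _ h => h, fun _ _ => List.prefix_rfl⟩⟩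

instance : Mul SE := ⟨fun α β => ⟨fun x => α (β x), fun x y h => α.lev _ _ (β.lev _ _ h),
  fun x i => α.step_prefix (β.step x i)⟩⟩

@[simp] theorem one_apply (x : List Bool) : (1 : SE) x = x := rfl
@[simp] theorem mul_apply (α β : SE) (x : List Bool) : (α * β) x = α (β x) := rfl

theorem ext' {α β : SE} (h : ∀ x, α x = β x) : α = β := SE.ext (funext h)

instance : Monoid SE where
  mul_assoc _ _ _ := rfl
  one_mul _ := rfl
  mul_one _ := rfl

/-- Embeddings fixing the first `n` levels. -/
def F (n : ℕ) : Set SE := {γ | ∀ x : List Bool, x.length < n → γ x = x}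

theorem one_F (n : ℕ) : (1 : SE) ∈ F n := fun _ _ => rfl
theorem mul_F {n : ℕ} {α β : SE} (ha : α ∈ F n) (hb : β ∈ F n) : α * β ∈ F n := by
  intro x hx; rw [mul_apply, hb x hx, ha x hx]
theorem F_anti {n m : ℕ} (h : n ≤ m) {α : SE} (ha : α ∈ F m) : α ∈ F n :=
  fun x hx => ha x (hx.trans_le h)

/-- same trace up to level `k`. -/
def tr (k : ℕ) (α β : SE) : Prop := ∀ x, (α x).take k = (β x).take k

theorem tr_refl (k : ℕ) (α : SE) : tr k α α := fun _ => rfl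
theorem tr.symm {k : ℕ} {α β : SE} (h : tr k α β) : tr k β α := fun x => (h x).symm
theorem tr.trans {k : ℕ} {α β γ : SE} (h : tr k α β) (h' : tr k β γ) : tr k α γ :=
  fun x => (h x).trans (h' x)
theorem tr.anti {k m : ℕ} (hk : k ≤ m) {α β : SE} (h : tr m α β) : tr k α β := by
  intro x
  have := congrArg (List.take k) (h x)
  simpa [List.take_take, hk] using this

theorem take_F {k : ℕ} {γ : SE} (h : γ ∈ F k) (y : List Bool) : (γ y).take k = y.take k := by
  rcases lt_or_ge y.length k with hy | hy
  · rw [h y hy]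
  · cases k with
    | zero => simp
    | succ k =>
      have h1 : (y.take k ++ [y[k]]) <+: y := by
        rw [List.take_concat_get' ]
        exact List.take_prefix _ _
      have h2 := γ.step_prefix h1
      rw [h _ (by simp), List.take_concat_get'] at h2
      have := List.prefix_iff_eq_take.1 h2
      rw [List.length_take, min_eq_left hy] at this
      exact this.symm

theorem tr_F {k : ℕ} {γ : SE} (h : γ ∈ F k) (α : SE) : tr k (γ * α) α :=
  fun x => take_F h (α x)

theorem tr_mul_left {k : ℕ} {γ : SE} (h : γ ∈ F k) {α β : SE} (hab : tr k α β) :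
    tr k (γ * α) (γ * β) := (tr_F h α).trans (hab.trans (tr_F h β).symm)

theorem tr_short {k : ℕ} {α β : SE} (h : tr k α β) {x : List Bool} (hx : (α x).length < k) :
    β x = α x := by
  have h1 := h x
  rw [List.take_of_length_le hx.le] at h1
  rw [h1, List.take_of_length_le]
  by_contra hlt
  have := congrArg List.length h1
  simp at this
  omega

/-- number of levels of `α` below `m`. -/
noncomputable def nl (m : ℕ) (α : SE) : ℕ :=
  Nat.find (p := fun k => m ≤ α.lv k) ⟨m, α.le_lv m⟩

theorem le_lv_nl (m : ℕ) (α : SE) : m ≤ α.lv (nl m α) :=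
  Nat.find_spec (p := fun k => m ≤ α.lv k) _

theorem lt_nl_iff {m : ℕ} {α : SE} {k : ℕ} : k < nl m α ↔ α.lv k < m := by
  constructor
  · intro h
    have := Nat.find_min (p := fun k => m ≤ α.lv k) _ h
    simpa using this
  · intro h
    by_contra hc
    have := α.lv_strictMono.monotone (not_lt.1 hc)
    have := le_lv_nl m α
    omega

theorem nl_le (m : ℕ) (α : SE) : nl m α ≤ m := by
  by_contra h
  have := lt_nl_iff.1 (not_le.1 h)
  have := α.le_lv m
  omega

theorem nl_eq_of {m : ℕ} {α : SE} {k : ℕ} (h : ∀ j, j < k ↔ α.lv j < m) : nl m α = k := by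
  apply le_antisymm
  · by_contra hc
    have := lt_nl_iff.1 (not_le.1 hc)
    rw [← h] at this; omega
  · by_contra hc
    have := (h _).1 (not_le.1 hc)
    rw [← lt_nl_iff] at this; omega

theorem tr_lv {k : ℕ} {α β : SE} (h : tr k α β) (j : ℕ) : α.lv j < k ↔ β.lv j < k := by
  have := congrArg List.length (h (List.replicate j false))
  simp at this
  have h1 : (α (List.replicate j false)).length = α.lv j := rfl
  have h2 : (β (List.replicate j false)).length = β.lv j := rfl
  omega

theorem nl_congr {m : ℕ} {α β : SE} (h : tr m α β) : nl m α = nl m β :=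
  nl_eq_of fun j => by rw [lt_nl_iff, tr_lv h]

theorem length_lt_nl {m : ℕ} {α : SE} {x : List Bool} :
    x.length < nl m α ↔ (α x).length < m := by
  rw [lt_nl_iff, length_eq]

/-- maximal representative of the trace class. -/
noncomputable def mx (m : ℕ) (α : SE) : SE where
  f x := if x.length < nl m α then α x else (α (x.take (nl m α))).take m ++ x.drop (nl m α)
  lev x y h := by
    rw [h]
    split_ifs with h1
    · exact α.lev _ _ h
    · have : (α (x.take (nl m α))).length = (α (y.take (nl m α))).length :=
        α.lev _ _ (by simp [h])
      simp [this, h]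
  step x i := by
    have hs : (x ++ [i]).length = x.length + 1 := by simp
    rcases lt_trichotomy (x.length + 1) (nl m α) with h | h | h
    · rw [if_pos (by omega), if_pos (by omega)]
      exact α.step x i
    · rw [if_pos (by omega), if_neg (by omega)]
      rw [List.take_of_length_le (l := x ++ [i]) (by omega), List.drop_of_length_le (by omega)]
      rw [List.append_nil]
      rw [List.prefix_take_iff]
      refine ⟨α.step x i, ?_⟩
      have := (length_lt_nl (m := m) (α := α) (x := x)).1 (by omega)
      simp; omega
    · rw [if_neg (by omega), if_neg (by omega)]
      rw [List.take_append_of_le_length (by omega), List.drop_append_of_le_length (by omega)]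
      rw [List.append_assoc]

theorem mx_lt {m : ℕ} {α : SE} {x : List Bool} (h : x.length < nl m α) : mx m α x = α x :=
  if_pos h
theorem mx_ge {m : ℕ} {α : SE} {x : List Bool} (h : nl m α ≤ x.length) :
    mx m α x = (α (x.take (nl m α))).take m ++ x.drop (nl m α) :=
  if_neg (not_lt.2 h)

theorem le_length_of_le {m : ℕ} {α : SE} {x : List Bool} (h : nl m α ≤ x.length) :
    m ≤ (α x).length := by
  by_contra hc
  have := length_lt_nl.2 (not_le.1 hc)
  omega

theorem take_take_nl {m : ℕ} {α : SE} {x : List Bool} {k : ℕ} (hk : nl m α ≤ k) :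
    (α (x.take k)).take m = (α x).take m := by
  rcases lt_or_ge x.length k with h | h
  · rw [List.take_of_length_le h.le]
  · have h1 : m ≤ (α (x.take k)).length := le_length_of_le (by simp; omega)
    obtain ⟨t, ht⟩ := α.mono (List.take_prefix k x)
    rw [← ht, List.take_append_of_le_length h1]

theorem mx_tr (m : ℕ) (α : SE) : tr m (mx m α) α := by
  intro x
  rcases lt_or_ge x.length (nl m α) with h | h
  · rw [mx_lt h]
  · rw [mx_ge h, take_take_nl le_rfl]
    have : m ≤ (α x).length := le_length_of_le h
    rw [List.take_append_of_le_length (by simp; omega), List.take_take, min_self]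

theorem mx_congr {m : ℕ} {α β : SE} (h : tr m α β) : mx m α = mx m β := by
  apply ext'
  intro x
  have hn := nl_congr h
  rcases lt_or_ge x.length (nl m α) with hx | hx
  · rw [mx_lt hx, mx_lt (by rwa [← hn])]
    exact (tr_short h (length_lt_nl.1 hx)).symm
  · rw [mx_ge hx, mx_ge (by rwa [← hn]), ← hn, h]

theorem mx_eq_iff {m : ℕ} {α β : SE} : mx m α = mx m β ↔ tr m α β :=
  ⟨fun h => (mx_tr m α).symm.trans (h ▸ mx_tr m β), mx_congr⟩

theorem nl_mx (m : ℕ) (α : SE) : nl m (mx m α) = nl m α := nl_congr (mx_tr m α)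

theorem mx_fac (m : ℕ) (α : SE) : ∃ ε ∈ F (nl m α), α = mx m α * ε := by
  have key : ∀ x : List Bool, nl m α ≤ x.length →
      α x = (α (x.take (nl m α))).take m ++ (α x).drop m := by
    intro x hx
    rw [take_take_nl le_rfl, List.take_append_drop]
  refine ⟨⟨fun x => if x.length < nl m α then x else x.take (nl m α) ++ (α x).drop m, ?_, ?_⟩,
    ?_, ?_⟩
  · intro x y h
    rw [h]
    split_ifs with h1
    · exact h
    · simp [h, α.lev x y h]
  · intro x i
    have hs : (x ++ [i]).length = x.length + 1 := by simp
    rcases lt_trichotomy (x.length + 1) (nl m α) with h | h | h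
    · rw [if_pos (by omega), if_pos (by omega)]
    · rw [if_pos (by omega), if_neg (by omega), List.take_of_length_le (l := x ++ [i]) (by omega)]
      exact List.prefix_append _ _
    · rw [if_neg (by omega), if_neg (by omega)]
      rw [List.take_append_of_le_length (by omega), List.append_assoc, List.prefix_append_right_inj]
      have h1 := α.step x i
      have h2 : m ≤ (α x).length := le_length_of_le (by omega)
      have h3 := h1.drop m
      rwa [List.drop_append_of_le_length h2] at h3
  · intro x hx
    exact if_pos hx
  · apply ext'
    intro x
    rw [mul_apply]
    rcases lt_or_ge x.length (nl m α) with hx | hx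
    · have : (if x.length < nl m α then x else x.take (nl m α) ++ (α x).drop m) = x := if_pos hx
      show _ = mx m α (if x.length < nl m α then x else x.take (nl m α) ++ (α x).drop m)
      rw [this, mx_lt hx]
    · show _ = mx m α (if x.length < nl m α then x else x.take (nl m α) ++ (α x).drop m)
      rw [if_neg (by omega), mx_ge (by simp; omega)]
      have hl : (x.take (nl m α)).length = nl m α := by simp [hx]
      rw [List.take_append_of_le_length (by omega), List.drop_append_of_le_length (by omega),
        List.drop_of_length_le hl.le, List.take_take, min_self, List.nil_append]
      exact key x hx

theorem mx_fac_tr {m : ℕ} {α β : SE} (h : tr m β α) : ∃ ε ∈ F (nl m α), β = mx m α * ε := by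
  obtain ⟨ε, h1, h2⟩ := mx_fac m β
  rw [nl_congr h] at h1
  rw [mx_congr h] at h2
  exact ⟨ε, h1, h2⟩

theorem mx_right {m : ℕ} {α δ : SE} (h : δ ∈ F m) :
    ∃ ε ∈ F (nl m α), δ * mx m α = mx m α * ε :=
  mx_fac_tr ((tr_F h _).trans (mx_tr m α))

open Classical in
theorem mx_left {m : ℕ} {α ε : SE} (h : ε ∈ F (nl m α)) :
    ∃ δ ∈ F m, δ * mx m α = mx m α * ε := by
  set k := nl m α with hk
  set τ := mx m α with hτ
  let pick : List Bool → List Bool := fun t =>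
    if h : ∃ x : List Bool, x.length = k ∧ τ x = t then h.choose else List.replicate k false
  have pick_len : ∀ t, (pick t).length = k := by
    intro t
    simp only [pick]
    split_ifs with h
    · exact h.choose_spec.1
    · simp
  have pick_τ : ∀ x : List Bool, x.length = k → pick (τ x) = x := by
    intro x hx
    have h : ∃ y : List Bool, y.length = k ∧ τ y = τ x := ⟨x, hx, rfl⟩
    simp only [pick]
    rw [dif_pos h]
    exact τ.inj h.choose_spec.2
  refine ⟨⟨fun y => if y.length < m then y else
      y.take m ++ (ε (pick (y.take m) ++ y.drop m)).drop k, ?_, ?_⟩, ?_, ?_⟩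
  · intro x y hxy
    rw [hxy]
    split_ifs with h1
    · exact hxy
    · have := ε.lev (pick (x.take m) ++ x.drop m) (pick (y.take m) ++ y.drop m)
        (by simp [pick_len, hxy])
      simp [hxy, this]
  · intro x i
    have hs : (x ++ [i]).length = x.length + 1 := by simp
    rcases lt_trichotomy (x.length + 1) m with h | h | h
    · rw [if_pos (by omega), if_pos (by omega)]
    · rw [if_pos (by omega), if_neg (by omega), List.take_of_length_le (l := x ++ [i]) (by omega)]
      exact List.prefix_append _ _
    · rw [if_neg (by omega), if_neg (by omega)]
      rw [List.take_append_of_le_length (by omega), List.append_assoc, List.prefix_append_right_inj,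
        List.drop_append_of_le_length (by omega), ← List.append_assoc]
      have h1 := ε.step (pick (x.take m) ++ x.drop m) i
      have h2 : k ≤ (ε (pick (x.take m) ++ x.drop m)).length := by
        refine le_trans ?_ (ε.length_le _)
        simp [pick_len]
      have h3 := h1.drop k
      rwa [List.drop_append_of_le_length h2] at h3
  · intro x hx
    exact if_pos hx
  · apply ext'
    intro x
    rw [mul_apply, mul_apply]
    show (if (τ x).length < m then τ x else
      (τ x).take m ++ (ε (pick ((τ x).take m) ++ (τ x).drop m)).drop k) = _
    rcases lt_or_ge x.length k with hx | hx
    · rw [h x hx, if_pos]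
      rw [← length_lt_nl, hτ, nl_mx]; exact hx
    · have hge : m ≤ (τ x).length := by
        apply le_length_of_le; rw [hτ, nl_mx]; exact hx
      rw [if_neg (by omega)]
      have hxk : (x.take k).length = k := by simp [hx]
      have hm : ((α (x.take k)).take m).length = m := by
        have : m ≤ (α (x.take k)).length := le_length_of_le (by omega)
        simp [this]
      have e1 : τ x = (α (x.take k)).take m ++ x.drop k := mx_ge hx
      have e2 : τ (x.take k) = (α (x.take k)).take m := by
        rw [hτ, mx_ge (by omega), ← hk, List.take_take, min_self,
          List.drop_of_length_le hxk.le, List.append_nil]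
      have e3 : (τ x).take m = τ (x.take k) := by
        rw [e1, e2, List.take_append_of_le_length hm.ge, List.take_of_length_le hm.le]
      have e4 : (τ x).drop m = x.drop k := by
        rw [e1, List.drop_append_of_le_length hm.ge, List.drop_of_length_le hm.le, List.nil_append]
      rw [e3, e4, pick_τ _ hxk, List.take_append_drop]
      have e5 : τ (ε x) = (α ((ε x).take k)).take m ++ (ε x).drop k := by
        rw [hτ, mx_ge (by rw [← hk]; exact hx.trans (ε.length_le x))]
      rw [e5, take_F h, e2]

theorem range_mx_finite (m : ℕ) : (Set.range (mx m)).Finite := by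
  have hfin : Finite {l : List Bool // l.length ≤ m} := (List.finite_length_le Bool m)
  let Φ : SE → ({l : List Bool // l.length ≤ m} → {l : List Bool // l.length ≤ m}) :=
    fun α x => ⟨(α x.1).take m, by simp⟩
  have hΦ : ∀ α β, Φ α = Φ β → mx m α = mx m β := by
    intro α β h
    apply mx_congr
    intro x
    have := congrFun h ⟨x.take m, by simp⟩
    have := congrArg Subtype.val this
    simp only [Φ] at this
    rwa [take_take_nl (nl_le _ _), take_take_nl (nl_le _ _)] at this
  have : Set.range (mx m) ⊆ Set.range (fun φ : Set.range Φ => mx m φ.2.choose) := by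
    rintro _ ⟨α, rfl⟩
    have hα : Φ α ∈ Set.range Φ := ⟨α, rfl⟩
    exact ⟨⟨Φ α, hα⟩, hΦ _ _ hα.choose_spec⟩
  exact (Set.finite_range _).subset this

/-- the ambient level just above the first `k` levels of `α` -/
def up (k : ℕ) (α : SE) : ℕ := if k = 0 then 0 else α.lv (k - 1) + 1

theorem lt_up_iff {k : ℕ} {α : SE} {j : ℕ} : j < k ↔ α.lv j < up k α := by
  unfold up
  split_ifs with h
  · omega
  · have : j ≤ k - 1 ↔ α.lv j ≤ α.lv (k - 1) := α.lv_strictMono.le_iff_le.symm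
    omega

theorem nl_up (k : ℕ) (α : SE) : nl (up k α) α = k := nl_eq_of fun _ => lt_up_iff

theorem le_up (k : ℕ) (α : SE) : k ≤ up k α := by
  have := nl_le (up k α) α
  rwa [nl_up] at this

/-! infinite products -/

def pr (δ : ℕ → SE) (n : ℕ) : ℕ → SE
  | 0 => 1
  | j + 1 => pr δ n j * δ (n + j)

theorem pr_stable {δ : ℕ → SE} {n : ℕ} (hδ : ∀ m ≥ n, δ m ∈ F m) (x : List Bool) (i j : ℕ)
    (hj : x.length < n + j) : pr δ n (j + i) x = pr δ n j x := by
  induction i with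
  | zero => rfl
  | succ i ih =>
    rw [← ih]
    show (pr δ n (j + i) * δ (n + (j + i))) x = _
    rw [mul_apply, hδ _ (by omega) x (by omega)]

theorem pr_succ' (δ : ℕ → SE) (n j : ℕ) : pr δ n (j + 1) = δ n * pr δ (n + 1) j := by
  induction j with
  | zero => simp [pr]
  | succ j ih =>
    rw [pr, ih, pr, mul_assoc]
    congr 3
    omega

theorem lim_exists (δ : ℕ → SE) (n : ℕ) (hδ : ∀ m ≥ n, δ m ∈ F m) :
    ∃ γ : ℕ → SE, ∀ m ≥ n, γ m ∈ F m ∧ γ m = δ m * γ (m + 1) := by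
  let L : ℕ → SE := fun m => if hm : n ≤ m then
    ⟨fun x => pr δ m (x.length + 1) x, by
      intro x y h
      rw [h]; exact SE.lev _ _ _ h, by
      intro x i
      have h := pr_stable (fun k hk => hδ k (hm.trans hk)) x 1 (x.length + 1) (by omega)
      rw [← h]
      simp only [List.length_append, List.length_singleton]
      exact SE.step _ _ _⟩ else 1
  have hL : ∀ m ≥ n, ∀ x, L m x = pr δ m (x.length + 1) x := by
    intro m hm x
    simp only [L]
    rw [dif_pos hm]
  refine ⟨L, fun m hm => ⟨?_, ?_⟩⟩
  · intro x hx
    rw [hL m hm]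
    have := pr_stable (fun k hk => hδ k (hm.trans hk)) x (x.length + 1) 0 (by omega)
    rw [zero_add] at this
    rw [this]; rfl
  · apply ext'
    intro x
    rw [mul_apply, hL m hm, hL (m + 1) (by omega)]
    rw [pr_succ' δ m x.length, mul_apply]
    have := pr_stable (fun k hk => hδ k (by omega)) x 1 x.length
      (show x.length < (m + 1) + x.length by omega)
    rw [this]

/-! factorization -/

theorem fac {α β : SE} (h : ∀ x, ∃ y, α x = β y) : ∃ γ, α = β * γ := by
  choose φ hφ using h
  refine ⟨⟨φ, ?_, ?_⟩, ext' hφ⟩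
  · intro x y hxy
    apply β.lv_strictMono.injective
    rw [← length_eq, ← length_eq, ← hφ, ← hφ]
    exact α.lev _ _ hxy
  · intro x i
    have h1 := α.step x i
    rw [hφ, hφ] at h1
    have hlen : (φ x).length < (φ (x ++ [i])).length := by
      apply β.lv_strictMono.lt_iff_lt.1
      rw [← length_eq, ← length_eq]
      have := h1.length_le
      simp at this; omega
    set p := φ x
    set q := φ (x ++ [i])
    -- `q.take |p|` equals `p`
    have hq : (q.take p.length) = p := by
      apply β.inj
      have a1 : β (q.take p.length) <+: β q := β.mono (List.take_prefix _ _)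
      have a2 : β p <+: β q := (List.prefix_append _ _).trans h1
      have hl : (β (q.take p.length)).length = (β p).length := β.lev _ _ (by simp; omega)
      exact (List.prefix_of_prefix_length_le a1 a2 hl.le).eq_of_length hl
    have hq2 : (p ++ [q[p.length]]) <+: q := by
      have := List.take_concat_get' q p.length hlen
      rw [hq] at this
      rw [this]
      exact List.take_prefix _ _
    have h3 := β.step_prefix hq2
    by_cases hi : q[p.length] = i
    · rwa [hi] at hq2
    · exfalso
      have hi' : i = ! q[p.length] := by
        revert hi; generalize q[p.length] = b; cases i <;> cases b <;> simp
      rw [hi'] at h1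
      exact prefix_diff h3 h1

theorem eq_one_of_length {γ : SE} (h : ∀ x, (γ x).length = x.length) : γ = 1 := by
  apply ext'
  intro x
  induction x using List.reverseRecOn with
  | nil => simpa using h []
  | append_singleton x i ih =>
    have h1 := γ.step x i
    rw [ih] at h1
    exact (h1.eq_of_length (by rw [h]; simp)).symm

theorem eq_of_range {α β : SE} (h : ∀ x, ∃ y, α x = β y) (h' : ∀ x, ∃ y, β x = α y) : α = β := by
  obtain ⟨γ, rfl⟩ := fac h
  obtain ⟨δ, hδ⟩ := fac h'
  have h1 : ∀ x, γ (δ x) = x := by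
    intro x
    apply β.inj
    exact (congrFun (congrArg SE.f hδ) x).symm
  have h2 : γ = 1 := by
    apply eq_one_of_length
    intro x
    apply le_antisymm _ (γ.length_le x)
    have a := length_le γ (δ x)
    have b := length_le δ x
    rw [h1] at a
    have : (δ x).length = x.length := by omega
    rw [γ.lev x (δ x) this.symm, h1]
  rw [h2, mul_one]

theorem range_of_cofinal {α β : SE} (K : ℕ) (h : ∀ z, K ≤ (α z).length → ∃ y, α z = β y) (x : List Bool) :
    ∃ y, α x = β y := by
  have hp : ∀ i : Bool, K ≤ (α (x ++ i :: List.replicate K false)).length := by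
    intro i
    refine le_trans ?_ (α.length_le _)
    simp; omega
  obtain ⟨p, hp'⟩ := h _ (hp false)
  obtain ⟨q, hq'⟩ := h _ (hp true)
  have a1 : (α x ++ [false]) <+: β p := hp' ▸ α.step_prefix ⟨List.replicate K false, by simp⟩
  have a2 : (α x ++ [true]) <+: β q := hq' ▸ α.step_prefix ⟨List.replicate K false, by simp⟩
  have hl : p.length = q.length := by
    apply β.lv_strictMono.injective
    rw [← length_eq, ← length_eq, ← hp', ← hq']
    exact α.lev _ _ (by simp)
  have hne : p ≠ q := by
    rintro rfl
    exact prefix_diff a1 a2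
  obtain ⟨c, i, h1, h2⟩ := split_diff hl hne
  have b1 := β.step_prefix h1
  have b2 := β.step_prefix h2
  refine ⟨c, ?_⟩
  rcases lt_trichotomy (α x).length (β c).length with hlt | heq | hlt
  · exfalso
    have c1 : (α x ++ [false]) <+: β c :=
      List.prefix_of_prefix_length_le a1 ((List.prefix_append _ _).trans b1) (by simp; omega)
    have c2 : (α x ++ [true]) <+: β c :=
      List.prefix_of_prefix_length_le a2 ((List.prefix_append _ _).trans b2) (by simp; omega)
    exact prefix_diff c1 c2
  · exact (List.prefix_of_prefix_length_le ((List.prefix_append _ _).trans a1)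
      ((List.prefix_append _ _).trans b1) heq.le).eq_of_length heq
  · exfalso
    have c1 : (β c ++ [i]) <+: α x :=
      List.prefix_of_prefix_length_le b1 ((List.prefix_append _ _).trans a1) (by simp; omega)
    have c2 : (β c ++ [!i]) <+: α x :=
      List.prefix_of_prefix_length_le b2 ((List.prefix_append _ _).trans a2) (by simp; omega)
    exact prefix_diff c1 c2

/-- cofinally many elements of the range of `β` are not in the range of `α` -/
def Bad (α β : SE) : Prop := ∀ K : ℕ, ∃ z, K ≤ (β z).length ∧ ∀ y, β z ≠ α y

theorem bad_or {α β : SE} (h : α ≠ β) : Bad α β ∨ Bad β α := by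
  by_contra hc
  simp only [Bad, not_or, not_forall, not_exists, not_and] at hc
  obtain ⟨⟨K, hK⟩, K', hK'⟩ := hc
  apply h
  apply eq_of_range
  · apply range_of_cofinal K'
    intro z hz
    have := hK' z hz
    push Not at this
    exact this
  · apply range_of_cofinal K
    intro z hz
    have := hK z hz
    push Not at this
    exact this

end SE


section CS
open Filter
attribute [local instance] Ultrafilter.mul Ultrafilter.semigroup

theorem uf_map_mul {M N : Type*} [Monoid M] [Monoid N] (φ : M →* N) (U V : Ultrafilter M) :
    (U * V).map φ = U.map φ * V.map φ := by
  apply Ultrafilter.coe_inj.mp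
  apply Filter.ext'
  intro p
  change (∀ᶠ m in (↑(U * V) : Filter M), p (φ m)) ↔ _
  rw [Ultrafilter.eventually_mul, Ultrafilter.eventually_mul]
  change _ ↔ (∀ᶠ m in (U : Filter M), ∀ᶠ m' in (V : Filter M), p (φ m * φ m'))
  simp

theorem uf_min_left (W : Type*) [Monoid W] : ∃ L : Set (Ultrafilter W), L.Nonempty ∧
    (∀ x, ∀ l ∈ L, x * l ∈ L) ∧ ∀ l ∈ L, ∀ l' ∈ L, ∃ y, l' = y * l := by
  let S : Set (Set (Ultrafilter W)) := {N | IsClosed N ∧ N.Nonempty ∧ ∀ x, ∀ l ∈ N, x * l ∈ N}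
  obtain ⟨N, hN⟩ : ∃ N', Minimal (· ∈ S) N' := by
    refine zorn_superset _ fun c hcs hc => ?_
    refine
      ⟨⋂₀ c, ⟨isClosed_sInter fun t ht => (hcs ht).1, ?_, fun x l hl => ?_⟩, fun s hs =>
        Set.sInter_subset_of_mem hs⟩
    · obtain rfl | hcnemp := c.eq_empty_or_nonempty
      · rw [Set.sInter_empty]
        exact ⟨pure 1, trivial⟩
      convert
        @IsCompact.nonempty_iInter_of_directed_nonempty_isCompact_isClosed _ _ _
          hcnemp.coe_sort ((↑) : c → Set (Ultrafilter W)) ?_ ?_ ?_ ?_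
      · exact Set.sInter_eq_iInter
      · exact (DirectedOn.directed_val (IsChain.directedOn hc.symm))
      exacts [fun i => (hcs i.prop).2.1, fun i => (hcs i.prop).1.isCompact,
        fun i => (hcs i.prop).1]
    · rw [Set.mem_sInter]
      exact fun t ht => (hcs ht).2.2 x l (Set.mem_sInter.mp hl t ht)
  refine ⟨N, hN.prop.2.1, hN.prop.2.2, fun l hl l' hl' => ?_⟩
  have hsub : Set.range (· * l) ⊆ N := by
    rintro _ ⟨x, rfl⟩
    exact hN.prop.2.2 x l hl
  have hmem : Set.range (· * l) ∈ S := by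
    refine ⟨(isCompact_range (Ultrafilter.continuous_mul_left l)).isClosed, ⟨_, l, rfl⟩, ?_⟩
    rintro x _ ⟨y, rfl⟩
    exact ⟨x * y, mul_assoc _ _ _⟩
  obtain ⟨y, hy⟩ := hN.le_of_le hmem hsub hl'
  exact ⟨y, hy.symm⟩

theorem cs_abstract {Λ W V : Type*} [Finite Λ] [Monoid W] [Monoid V] (T : Λ → V →* W)
    (ι : W →* V) (hT : ∀ a w, T a (ι w) = w) (R : Set V) (hR : R.Nonempty)
    (hRV : ∀ r ∈ R, ∀ x, r * x ∈ R) (P : W → Prop) :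
    ∃ S : Set W, S.Nonempty ∧ ((∀ w ∈ S, P w) ∨ (∀ w ∈ S, ¬ P w)) ∧
      ∀ G ⊆ S, G.Finite → ∃ z ∈ R, ∀ w ∈ G, ∀ a, w * T a z ∈ S := by
  obtain ⟨L, ⟨p, hp⟩, hL1, hL2⟩ := uf_min_left W
  -- the subsemigroup
  let Q : Set (Ultrafilter V) := {q | R ∈ q} ∩ Set.range (· * p.map ι)
  obtain ⟨v, hv⟩ := hR
  have hQne : Q.Nonempty := by
    refine ⟨pure v * p.map ι, ?_, pure v, rfl⟩
    change ∀ᶠ m in (↑(pure v * p.map ι) : Filter V), m ∈ R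
    rw [Ultrafilter.eventually_mul]
    change ∀ᶠ m' in (↑(p.map ι) : Filter V), v * m' ∈ R
    exact Eventually.of_forall fun x => hRV v hv x
  have hQc : IsCompact Q := ((ultrafilter_isClosed_basic R).inter
    (isCompact_range (Ultrafilter.continuous_mul_left _)).isClosed).isCompact
  obtain ⟨q, ⟨hqR, x, hx⟩, hqi⟩ := exists_idempotent_in_compact_subsemigroup
    (fun r => Ultrafilter.continuous_mul_left r) Q hQne hQc (by
      rintro q1 ⟨h1, -⟩ q2 ⟨-, x2, rfl⟩
      refine ⟨?_, q1 * x2, mul_assoc _ _ _⟩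
      change ∀ᶠ m in (↑(q1 * (x2 * p.map ι)) : Filter V), m ∈ R
      rw [Ultrafilter.eventually_mul]
      filter_upwards [h1] with m hm
      exact Eventually.of_forall fun x => hRV m hm x)
  let r : Λ → Ultrafilter W := fun a => q.map (T a)
  have hrL : ∀ a, r a ∈ L := by
    intro a
    have : r a = x.map (T a) * p := by
      change q.map (T a) = _
      rw [← hx]
      simp only [uf_map_mul, Ultrafilter.map_map]
      congr 1
      convert Ultrafilter.map_id p using 2
      funext w; exact hT a w
    rw [this]; exact hL1 _ _ hp
  have hri : ∀ a, r a * r a = r a := by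
    intro a
    change q.map (T a) * q.map (T a) = q.map (T a)
    rw [← uf_map_mul, hqi]
  have hlr : ∀ l ∈ L, ∀ a, l * r a = l := by
    intro l hl a
    obtain ⟨y, rfl⟩ := hL2 (r a) (hrL a) l hl
    rw [mul_assoc, hri]
  have main : ∀ A : Set W, A ∈ p → ∃ S ⊆ A, S.Nonempty ∧
      ∀ G ⊆ S, G.Finite → ∃ z ∈ R, ∀ w ∈ G, ∀ a, w * T a z ∈ S := by
    intro A hA
    let S : Set W := {w | w ∈ A ∧ ∀ a, ∀ᶠ x in (r a : Filter W), w * x ∈ A}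
    have hS : S ∈ p := by
      have h1 : ∀ a, ∀ᶠ w in (p : Filter W), ∀ᶠ x in (r a : Filter W), w * x ∈ A := by
        intro a
        rw [← Ultrafilter.eventually_mul p (r a) (· ∈ A), hlr p hp a]
        exact hA
      have h2 := eventually_all.2 h1
      have hA' : ∀ᶠ w in (p : Filter W), w ∈ A := hA
      exact (hA'.and h2)
    have hstep : ∀ w ∈ S, ∀ a, ∀ᶠ x in (r a : Filter W), w * x ∈ S := by
      rintro w ⟨hw, hw'⟩ a
      have : ∀ b, ∀ᶠ x in (r a : Filter W), ∀ᶠ y in (r b : Filter W), w * (x * y) ∈ A := by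
        intro b
        rw [← Ultrafilter.eventually_mul (r a) (r b) (fun x => w * x ∈ A), hlr _ (hrL a) b]
        exact hw' a
      filter_upwards [hw' a, eventually_all.2 this] with x h1 h2
      exact ⟨h1, fun b => by simpa [mul_assoc] using h2 b⟩
    refine ⟨S, fun w hw => hw.1, p.nonempty_of_mem hS, fun G hG hfin => ?_⟩
    have h3 : ∀ᶠ z in (q : Filter V), ∀ w ∈ G, ∀ a, w * T a z ∈ S := by
      rw [eventually_all_finite hfin]
      intro w hw
      rw [eventually_all]
      intro a
      exact hstep w (hG hw) a
    have h4 : ∀ᶠ z in (q : Filter V), z ∈ R := hqR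
    obtain ⟨z, hz1, hz2⟩ := (h4.and h3).exists
    exact ⟨z, hz1, hz2⟩
  rcases p.em P with h | h
  · obtain ⟨S, h1, h2, h3⟩ := main {w | P w} h
    exact ⟨S, h2, Or.inl h1, h3⟩
  · obtain ⟨S, h1, h2, h3⟩ := main {w | ¬ P w} h
    exact ⟨S, h2, Or.inr h1, h3⟩

/-- substitution of a letter for the variable -/
def subst {Λ : Type*} (a : Λ) (z : List (Option Λ)) : List Λ := z.map (fun o => o.getD a)

def cat {Λ : Type*} (z : ℕ → List (Option Λ)) : ℕ → List Λ → List Λ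
  | _, [] => []
  | i, a :: s => (a :: subst a (z i)) ++ cat z (i + 1) s

theorem cat_append {Λ : Type*} (z : ℕ → List (Option Λ)) (i : ℕ) (s : List Λ) (a : Λ) :
    cat z i (s ++ [a]) = cat z i s ++ a :: subst a (z (i + s.length)) := by
  induction s generalizing i with
  | nil => simp [cat]
  | cons b s ih =>
    simp only [List.cons_append, cat, ih, List.append_assoc, List.length_cons]
    rw [show i + 1 + s.length = i + (s.length + 1) by omega]

theorem carlson_simpson {Λ : Type*} [Finite Λ] (P : List Λ → Prop) :
    ∃ (w : List Λ) (z : ℕ → List (Option Λ)),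
      (∀ s, P (w ++ cat z 0 s)) ∨ (∀ s, ¬ P (w ++ cat z 0 s)) := by
  obtain ⟨S, ⟨w, hw⟩, hP, hS⟩ := cs_abstract (Λ := Λ) (W := FreeMonoid Λ)
    (V := FreeMonoid (Option Λ)) (fun a => FreeMonoid.map (fun o => o.getD a))
    (FreeMonoid.map some) (by
      intro a w
      have h : ∀ l : List Λ, List.map (fun o => Option.getD o a) (List.map some l) = l := by
        intro l; simp
      exact h w)
    {x | ∃ z : FreeMonoid (Option Λ), x = FreeMonoid.of none * z} ⟨_, 1, rfl⟩ (by
      rintro _ ⟨z, rfl⟩ x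
      exact ⟨z * x, mul_assoc _ _ _⟩) (fun w => P w.toList)
  obtain ⟨S, w, hw, hP, hS'⟩ : ∃ S : Set (List Λ), ∃ w ∈ S, ((∀ w ∈ S, P w) ∨ (∀ w ∈ S, ¬ P w)) ∧
      ∀ G : {G : Set (List Λ) // G ⊆ S ∧ G.Finite}, ∃ z : List (Option Λ),
      ∀ w ∈ G.1, ∀ a, w ++ a :: subst a z ∈ S := by
    refine ⟨S, w, hw, hP, ?_⟩
    rintro ⟨G, hG, hfin⟩
    obtain ⟨_, ⟨z, rfl⟩, h⟩ := hS G hG hfin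
    exact ⟨z, h⟩
  choose Z hZ using hS'
  let G : ℕ → {G : Set (List Λ) // G ⊆ S ∧ G.Finite} := fun n => Nat.rec
    ⟨{w}, Set.singleton_subset_iff.2 hw, Set.finite_singleton _⟩
    (fun _ G => ⟨(fun p : List Λ × Λ => p.1 ++ p.2 :: subst p.2 (Z G)) '' (G.1 ×ˢ Set.univ), by
      rintro _ ⟨⟨u, a⟩, ⟨hu, -⟩, rfl⟩
      exact hZ G u hu a, (G.2.2.prod Set.finite_univ).image _⟩) n
  have key : ∀ s, w ++ cat (fun i => Z (G i)) 0 s ∈ (G s.length).1 := by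
    intro s
    induction s using List.reverseRecOn with
    | nil => simp [cat, G]
    | append_singleton s a ih =>
      rw [cat_append, ← List.append_assoc, List.length_append]
      refine ⟨(_, a), ⟨ih, trivial⟩, ?_⟩
      simp [G]
  refine ⟨w, fun i => Z (G i), ?_⟩
  rcases hP with hP | hP
  · exact Or.inl fun s => hP _ ((G s.length).2.1 (key s))
  · exact Or.inr fun s => hP _ ((G s.length).2.1 (key s))

end CS


theorem cat_map {Λ M : Type*} (f : Λ → M) (z : ℕ → List (Option Λ)) (i : ℕ) (s : List Λ) :
    (cat z i s).map f = cat (fun i => (z i).map (Option.map f)) i (s.map f) := by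
  induction s generalizing i with
  | nil => simp [cat]
  | cons a s ih =>
    simp only [cat, List.map_append, List.map_cons, ih]
    congr 2
    simp only [subst, List.map_map]
    congr 1
    funext o
    cases o <;> rfl

theorem cat_length {Λ M : Type*} (z : ℕ → List (Option Λ)) (z' : ℕ → List (Option M))
    (hz : ∀ i, (z i).length = (z' i).length) (i : ℕ) (s : List Λ) (s' : List M)
    (hs : s.length = s'.length) : (cat z i s).length = (cat z' i s').length := by
  induction s generalizing i s' with
  | nil => cases s' with
    | nil => simp [cat]
    | cons => simp at hs
  | cons a s ih => cases s' with
    | nil => simp at hs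
    | cons b s' =>
      have := ih (i + 1) s' (by simpa using hs)
      simp [cat, subst, this, hz]

namespace SE

/-- Embeddings which are the identity below level `k`. -/
def ins (k : ℕ) (h : List Bool → List Bool → List Bool)
    (hlen : ∀ x x' t t', x.length = k → x'.length = k → t.length = t'.length →
      (h x t).length = (h x' t').length)
    (hstep : ∀ x t i, x.length = k → (h x t ++ [i]) <+: h x (t ++ [i])) : SE where
  f y := if y.length < k then y else y.take k ++ h (y.take k) (y.drop k)
  lev x y hxy := by
    simp only [hxy]
    split_ifs with hk
    · exact hxy
    · have := hlen (x.take k) (y.take k) (x.drop k) (y.drop k) (by simp; omega) (by simp; omega)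
        (by simp; omega)
      simp only [List.length_append, this, List.length_take, hxy]
  step y i := by
    rcases lt_trichotomy (y.length + 1) k with hk | hk | hk
    · have : y.length < k := by omega
      simp [hk, this]
    · have h1 : y.length < k := by omega
      have h2 : (y ++ [i]).take k = y ++ [i] := List.take_of_length_le (by simp; omega)
      have h3 : ¬ (y ++ [i]).length < k := by simp; omega
      simp only [h1, h3, if_true, if_false, h2]
      exact List.prefix_append _ _
    · have h1 : ¬ y.length < k := by omega
      have h3 : ¬ (y ++ [i]).length < k := by simp; omega
      simp only [h1, h3, if_false]
      rw [List.take_append_of_le_length (by omega), List.drop_append_of_le_length (by omega),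
        List.append_assoc]
      exact (List.prefix_append_right_inj _).2 (hstep _ _ _ (by simp; omega))

theorem ins_F {k h hlen hstep} : ins k h hlen hstep ∈ F k := by
  intro x hx
  simp [ins, hx]

theorem ins_ge {k h hlen hstep} {y : List Bool} (hy : k ≤ y.length) :
    ins k h hlen hstep y = y.take k ++ h (y.take k) (y.drop k) := by
  simp [ins, not_lt.2 hy]

/-- letters -/
abbrev Lam (k : ℕ) := {x : List Bool // x.length = k} → Bool

def ev {k : ℕ} (x : List Bool) (a : Lam k) : Bool := if h : x.length = k then a ⟨x, h⟩ else false

def can (k : ℕ) (w : List (Lam k)) : SE := ins k (fun x t => w.map (ev x) ++ t)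
  (by intros; simp; omega) (by intro x t i _; simp)

theorem mx_eq_can {k : ℕ} {β : SE} (hβ : β ∈ F k) (w : List (Lam k))
    (h : ∀ x : List Bool, x.length = k → β x = x ++ w.map (ev x)) :
    mx (up (k + 1) β) β = can k w := by
  apply ext'
  intro y
  rcases lt_or_ge k y.length with hy | hy
  · rw [mx_ge (by rw [nl_up]; omega), nl_up]
    unfold can
    rw [ins_ge (by omega)]
    have h1 : (y.take k ++ [y[k]]) = y.take (k + 1) := List.take_concat_get' _ _ _
    have h2 := β.step (y.take k) y[k]
    rw [h1] at h2
    have hx : (y.take k).length = k := by simp; omega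
    have h4 : up (k + 1) β = (β (y.take k) ++ [y[k]]).length := by
      simp [up, length_eq, hx]
    rw [h4, ← List.prefix_iff_eq_take.1 h2, h _ hx]
    simp
  · rw [mx_lt (by rw [nl_up]; omega)]
    rcases lt_or_eq_of_le hy with hy | hy
    · rw [hβ y hy, can, ins_F y hy]
    · rw [h y hy, can, ins_ge hy.ge]
      simp [← hy]

theorem HL (k : ℕ) (P : SE → Prop) : ∃ γ ∈ F k,
    (∀ α ∈ F k, ∃ κ ∈ F k, ∃ ε ∈ F (k + 1), γ * α = κ * ε ∧ P κ) ∨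
    (∀ α ∈ F k, ∃ κ ∈ F k, ∃ ε ∈ F (k + 1), γ * α = κ * ε ∧ ¬ P κ) := by
  have hfin : Finite {x : List Bool // x.length = k} := List.finite_length_eq Bool k
  obtain ⟨w, z, hwz⟩ := carlson_simpson (Λ := Lam k) (fun w => P (can k w))
  let γ : SE := ins k (fun x t => w.map (ev x) ++
      cat (fun i => (z i).map (Option.map (ev x))) 0 t)
    (by
      intro x x' t t' _ _ ht
      have := cat_length (fun i => (z i).map (Option.map (ev x)))
        (fun i => (z i).map (Option.map (ev x'))) (by simp) 0 t t' ht
      simp [this])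
    (by
      intro x t i _
      rw [cat_append, List.append_assoc]
      exact (List.prefix_append_right_inj _).2 ((List.prefix_append_right_inj _).2
        ⟨_, by simp; rfl⟩))
  have hγ : γ ∈ F k := ins_F
  have key : ∀ α ∈ F k, ∃ s, ∃ ε ∈ F (k + 1), γ * α = can k (w ++ cat z 0 s) * ε := by
    intro α hα
    let s : List (Lam k) := (List.range (α.lv k - k)).map
      (fun i x => (α x.1).getD (k + i) false)
    have hs : ∀ x : List Bool, x.length = k → s.map (ev x) = (α x).drop k := by
      intro x hx
      have hl : (α x).length = α.lv k := by rw [length_eq, hx]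
      apply List.ext_getElem
      · simp [s, hl]
      · intro i h1 h2
        simp at h2
        simp [s, ev, hx]
        rw [List.getElem?_eq_getElem (by omega)]
        rfl
    refine ⟨s, ?_⟩
    rw [← mx_eq_can (mul_F hγ hα)]
    · obtain ⟨ε, h1, h2⟩ := mx_fac (up (k + 1) (γ * α)) (γ * α)
      rw [nl_up] at h1
      exact ⟨ε, h1, h2⟩
    · intro x hx
      have h1 : (α x).take k = x := by rw [take_F hα, ← hx, List.take_length]
      rw [mul_apply, ins_ge (by have := α.length_le x; omega), h1, ← hs x hx, List.map_append,
        cat_map]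
  refine ⟨γ, hγ, ?_⟩
  rcases hwz with h | h
  · left
    intro α hα
    obtain ⟨s, ε, h1, h2⟩ := key α hα
    exact ⟨_, ins_F, ε, h1, h2, h s⟩
  · right
    intro α hα
    obtain ⟨s, ε, h1, h2⟩ := key α hα
    exact ⟨_, ins_F, ε, h1, h2, h s⟩

end SE


namespace SE

def DC (k : ℕ) (D : Set SE) : Prop :=
  (∀ B ∈ D, ∀ γ ∈ F k, B * γ ∈ D) ∧ ∀ B, ∃ γ ∈ F k, B * γ ∈ D

theorem DC_univ (k : ℕ) : DC k Set.univ := ⟨fun _ _ _ _ => trivial, fun _ => ⟨1, one_F k, trivial⟩⟩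

theorem DC.inter {k : ℕ} {D D' : Set SE} (h : DC k D) (h' : DC k D') : DC k (D ∩ D') := by
  refine ⟨fun B hB γ hγ => ⟨h.1 B hB.1 γ hγ, h'.1 B hB.2 γ hγ⟩, fun B => ?_⟩
  obtain ⟨γ, h1, h2⟩ := h.2 B
  obtain ⟨γ', h3, h4⟩ := h'.2 (B * γ)
  refine ⟨γ * γ', mul_F h1 h3, ?_⟩
  rw [← mul_assoc]
  exact ⟨h.1 _ h2 _ h3, h4⟩

theorem DC_all {ι : Type*} {k : ℕ} {s : Set ι} (hs : s.Finite) (D : ι → Set SE)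
    (h : ∀ i ∈ s, DC k (D i)) : DC k {B | ∀ i ∈ s, B ∈ D i} := by
  induction s, hs using Set.Finite.induction_on with
  | empty => simpa using DC_univ k
  | @insert a s _ _ ih =>
    have h1 := (h a (Set.mem_insert _ _)).inter (ih fun i hi => h i (Set.mem_insert_of_mem _ hi))
    convert h1 using 1
    ext B
    simp

theorem DC_dec {k : ℕ} (P : SE → Prop) (hP : ∀ B, P B → ∀ γ ∈ F k, P (B * γ)) :
    DC k {B | P B ∨ ∀ γ ∈ F k, ¬ P (B * γ)} := by
  constructor
  · rintro B (h | h) γ hγ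
    · exact Or.inl (hP B h γ hγ)
    · right
      intro γ' hγ'
      rw [mul_assoc]
      exact h _ (mul_F hγ hγ')
  · intro B
    by_cases h : ∃ γ ∈ F k, P (B * γ)
    · obtain ⟨γ, h1, h2⟩ := h
      exact ⟨γ, h1, Or.inl h2⟩
    · push Not at h
      refine ⟨1, one_F k, Or.inr ?_⟩
      simpa using h

theorem FA_step {n m : ℕ} (D : ℕ → Set SE) (h : ∀ k ≥ n, DC k (D k)) (C : SE) :
    ∃ δ ∈ F m, ∀ α : SE, n ≤ nl m α → C * δ * mx m α ∈ D (nl m α) := by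
  have : ∀ T : Set SE, T.Finite → T ⊆ Set.range (mx m) → ∃ δ ∈ F m, ∀ τ ∈ T, n ≤ nl m τ →
      C * δ * τ ∈ D (nl m τ) := by
    intro T hT
    induction T, hT using Set.Finite.induction_on with
    | empty => intro _; exact ⟨1, one_F m, by simp⟩
    | @insert τ T _ _ ih =>
      intro hT
      obtain ⟨δ, h1, h2⟩ := ih fun x hx => hT (Set.mem_insert_of_mem _ hx)
      obtain ⟨α, rfl⟩ := hT (Set.mem_insert _ _)
      by_cases hn : n ≤ nl m α
      · obtain ⟨ε, h3, h4⟩ := (h _ hn).2 (C * δ * mx m α)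
        obtain ⟨δ', h5, h6⟩ := mx_left h3
        refine ⟨δ * δ', mul_F h1 h5, ?_⟩
        rintro τ (rfl | hτ) hτn
        · rw [nl_mx, ← mul_assoc, mul_assoc, h6, ← mul_assoc]
          exact h4
        · obtain ⟨β, rfl⟩ := hT (Set.mem_insert_of_mem _ hτ)
          obtain ⟨ε', h7, h8⟩ := mx_right (α := β) h5
          rw [← mul_assoc, mul_assoc, h8, ← mul_assoc]
          have := h2 _ hτ hτn
          rw [nl_mx] at *
          exact (h _ hτn).1 _ this _ h7
      · refine ⟨δ, h1, ?_⟩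
        rintro τ (rfl | hτ) hτn
        · rw [nl_mx] at hτn
          exact absurd hτn hn
        · exact h2 _ hτ hτn
  obtain ⟨δ, h1, h2⟩ := this _ (range_mx_finite m) subset_rfl
  refine ⟨δ, h1, fun α hα => ?_⟩
  have := h2 _ ⟨α, rfl⟩ (by rwa [nl_mx])
  rwa [nl_mx] at this

theorem FA {n : ℕ} (D : ℕ → Set SE) (h : ∀ k ≥ n, DC k (D k)) (B : SE) :
    ∃ γ ∈ F n, ∀ α : SE, ∀ k ≥ n, B * γ * α ∈ D k := by
  choose δ hδ hδ' using fun m C => FA_step (m := m) D h C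
  let C : ℕ → SE := fun m => Nat.rec B (fun m C => if m < n then C else C * δ m C) m
  have hC : ∀ m, C (m + 1) = if m < n then C m else C m * δ m (C m) := fun m => rfl
  have hCn : C n = B := by
    have : ∀ m ≤ n, C m = B := by
      intro m
      induction m with
      | zero => intro _; rfl
      | succ m ih =>
        intro hm
        rw [hC, if_pos (by omega), ih (by omega)]
    exact this n le_rfl
  obtain ⟨γ, hγ⟩ := lim_exists (fun m => δ m (C m)) n (fun m _ => hδ m (C m))
  have hCγ : ∀ m, n ≤ m → C m * γ m = B * γ n := by
    intro m hm
    induction m, hm using Nat.le_induction with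
    | base => rw [hCn]
    | succ m hm ih =>
      rw [← ih, hC, if_neg (by omega), (hγ m hm).2, mul_assoc]
  refine ⟨γ n, (hγ n le_rfl).1, fun α k hk => ?_⟩
  have hm : n ≤ up k α := hk.trans (le_up k α)
  set m := up k α with hmdef
  have hnl : nl m α = k := nl_up k α
  obtain ⟨ε, h1, h2⟩ := mx_fac m α
  have h3 : γ (m + 1) ∈ F m := F_anti (Nat.le_succ m) (hγ (m + 1) (by omega)).1
  obtain ⟨ε', h4, h5⟩ := mx_right (α := α) h3
  have h6 := hδ' m (C m) α (by omega)
  rw [hnl] at h1 h4 h6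
  have : B * γ n * α = C m * δ m (C m) * mx m α * (ε' * ε) := by
    rw [← hCγ m hm, (hγ m hm).2]
    conv_lhs => rw [h2]
    simp only [mul_assoc]
    rw [← mul_assoc (γ (m + 1)), h5]
    simp only [mul_assoc]
  rw [this]
  exact (h k hk).1 _ h6 _ (mul_F h4 h1)

theorem PH {k : ℕ} (Q N : Set SE) (hQ : ∀ B ∈ Q, ∀ ε ∈ F (k + 1), B * ε ∈ Q)
    (hN : ∀ B ∈ N, ∀ ε ∈ F (k + 1), B * ε ∈ N)
    (hd : ∀ B, ∃ ε ∈ F (k + 1), B * ε ∈ Q ∪ N) (B : SE) :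
    ∃ γ ∈ F k, (∀ α ∈ F k, B * γ * α ∈ Q) ∨ (∀ α ∈ F k, B * γ * α ∈ N) := by
  obtain ⟨γ, h1, h2⟩ := FA (n := k) (fun j => if j = k + 1 then Q ∪ N else Set.univ) (by
    intro j hj
    split_ifs with hjk
    · subst hjk
      refine ⟨?_, hd⟩
      rintro B (hB | hB) ε hε
      · exact Or.inl (hQ B hB ε hε)
      · exact Or.inr (hN B hB ε hε)
    · exact DC_univ j) B
  have h3 : ∀ α, B * γ * α ∈ Q ∪ N := by
    intro α
    simpa using h2 α (k + 1) (by omega)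
  obtain ⟨γ', h4, h5⟩ := HL k (fun κ => B * γ * κ ∈ Q)
  refine ⟨γ * γ', mul_F h1 h4, ?_⟩
  rcases h5 with h5 | h5
  · left
    intro α hα
    obtain ⟨κ, h6, ε, h7, h8, h9⟩ := h5 α hα
    rw [mul_assoc, mul_assoc, h8, ← mul_assoc, ← mul_assoc]
    exact hQ _ h9 _ h7
  · right
    intro α hα
    obtain ⟨κ, h6, ε, h7, h8, h9⟩ := h5 α hα
    rw [mul_assoc, mul_assoc, h8, ← mul_assoc, ← mul_assoc]
    exact hN _ ((h3 κ).resolve_left h9) _ h7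

def Dec (k : ℕ) (P : SE → Prop) (B : SE) : Prop :=
  (∀ γ ∈ F k, P (B * γ)) ∨ (∀ γ ∈ F k, ¬ P (B * γ))

theorem Dec.mul {k : ℕ} {P : SE → Prop} {B : SE} (h : Dec k P B) {γ : SE} (hγ : γ ∈ F k) :
    Dec k P (B * γ) := by
  rcases h with h | h
  · left; intro δ hδ; rw [mul_assoc]; exact h _ (mul_F hγ hδ)
  · right; intro δ hδ; rw [mul_assoc]; exact h _ (mul_F hγ hδ)

theorem openRamsey {k : ℕ} (O : ℕ → Set SE) (hO : ∀ j ≥ k, ∀ B ∈ O j, ∀ ε ∈ F j, B * ε ∈ O j)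
    (B : SE) : ∃ γ ∈ F k, Dec k (fun C => ∃ j ≥ k, C ∈ O j) (B * γ) := by
  set U : SE → Prop := fun C => ∃ j ≥ k, C ∈ O j with hU
  let Acc : ℕ → Set SE := fun j => {B | ∀ δ ∈ F j, U (B * δ)}
  let Rej : ℕ → Set SE := fun j => {B | ∀ γ ∈ F j, B * γ ∉ Acc j}
  have hAcc : ∀ j, ∀ B ∈ Acc j, ∀ γ ∈ F j, B * γ ∈ Acc j := by
    intro j B hB γ hγ δ hδ
    rw [mul_assoc]; exact hB _ (mul_F hγ hδ)
  have hRej : ∀ j, ∀ B ∈ Rej j, ∀ γ ∈ F j, B * γ ∈ Rej j := by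
    intro j B hB γ hγ δ hδ
    rw [mul_assoc]; exact hB _ (mul_F hγ hδ)
  have hD1 : ∀ j, DC j (Acc j ∪ Rej j) := fun j => DC_dec (fun B => B ∈ Acc j) (hAcc j)
  let H : ℕ → Set SE := fun j => {B | B ∈ Acc j ∨ ∀ α ∈ F j, B * α ∈ Rej (j + 1)}
  have hH : ∀ j ≥ k, DC j (H j) := by
    intro j _
    constructor
    · rintro B (hB | hB) γ hγ
      · exact Or.inl (hAcc j B hB γ hγ)
      · right; intro α hα; rw [mul_assoc]; exact hB _ (mul_F hγ hα)
    · intro B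
      obtain ⟨γ, h1, h2 | h2⟩ := (hD1 j).2 B
      · exact ⟨γ, h1, Or.inl h2⟩
      · obtain ⟨γ', h3, h4⟩ := PH (k := j) (Acc (j + 1)) (Rej (j + 1)) (hAcc _) (hRej _)
          (hD1 (j + 1)).2 (B * γ)
        refine ⟨γ * γ', mul_F h1 h3, ?_⟩
        rw [← mul_assoc]
        rcases h4 with h4 | h4
        · left
          intro δ hδ
          have := h4 δ hδ 1 (one_F _)
          rwa [mul_one] at this
        · exact Or.inr h4
  obtain ⟨γ, hγ, h⟩ := FA H hH B
  refine ⟨γ, hγ, ?_⟩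
  have h0 := h 1 k le_rfl
  rw [mul_one] at h0
  rcases h0 with h0 | h0
  · exact Or.inl h0
  · right
    have hall : ∀ j, k + 1 ≤ j → ∀ α ∈ F k, B * γ * α ∈ Rej j := by
      intro j hj
      induction j, hj using Nat.le_induction with
      | base => exact h0
      | succ j hj ih =>
        intro α hα
        rcases h α j (by omega) with h1 | h1
        · exact absurd (by rwa [mul_one]) (ih α hα 1 (one_F j))
        · simpa using h1 1 (one_F j)
    rintro α hα ⟨j, hj, hjO⟩
    apply hall (j + 1) (by omega) α hα 1 (one_F _)
    rw [mul_one]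
    intro δ hδ
    exact ⟨j, hj, hO j hj _ hjO _ (F_anti (Nat.le_succ j) hδ)⟩

/-- `w` extends the finite sequence `u` -/
def Ext (u : List ℕ) (w : ℕ → ℕ) : Prop := ∀ i < u.length, u.getD i 0 = w i

theorem Ext_nil (w : ℕ → ℕ) : Ext [] w := by intro i hi; simp at hi

theorem Ext_succ {u : List ℕ} {w : ℕ → ℕ} (h : Ext u w) : Ext (u ++ [w u.length]) w := by
  intro i hi
  simp at hi
  rcases lt_or_eq_of_le hi with h1 | rfl
  · have := h i h1
    rw [List.getD_append _ _ _ _ h1]; exact this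
  · simp

theorem Ext_pre {u v : List ℕ} {w : ℕ → ℕ} (h : Ext (u ++ v) w) : Ext u w := by
  intro i hi
  have := h i (by simp; omega)
  rwa [List.getD_append _ _ _ _ hi] at this

def U (k : ℕ) : Set (List ℕ) := {u | Encodable.encode u ≤ k}

theorem U_finite (k : ℕ) : (U k).Finite :=
  (Set.finite_Iic k).preimage Encodable.encode_injective.injOn

theorem nil_U (k : ℕ) : [] ∈ U k := by simp [U]

theorem U_mono {j k : ℕ} (h : j ≤ k) : U j ⊆ U k := fun _ hu => le_trans hu h

theorem MR_aux (h : (ℕ → ℕ) → SE)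
    (hc : ∀ w x, ∃ n, ∀ w', (∀ i < n, w' i = w i) → h w' x = h w x) (n : ℕ) (B : SE) :
    ∃ γ ∈ F n, Dec n (fun C => ∃ w, h w = C) (B * γ) := by
  let X : List ℕ → Set SE := fun u => {C | ∃ w, Ext u w ∧ h w = C}
  let rej : ℕ → List ℕ → Set SE := fun k u => {B | ∀ γ ∈ F k, B * γ ∉ X u}
  let live : ℕ → List ℕ → Set SE := fun k u => {B | ∀ γ ∈ F k, B * γ ∉ rej k u}
  have hrej : ∀ k u, ∀ B ∈ rej k u, ∀ γ ∈ F k, B * γ ∈ rej k u := by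
    intro k u B hB γ hγ δ hδ
    rw [mul_assoc]; exact hB _ (mul_F hγ hδ)
  have hlive : ∀ k u, ∀ B ∈ live k u, ∀ γ ∈ F k, B * γ ∈ live k u := by
    intro k u B hB γ hγ δ hδ
    rw [mul_assoc]; exact hB _ (mul_F hγ hδ)
  let D : ℕ → Set SE := fun k => {B | ∀ u ∈ U k, B ∈ rej k u ∪ live k u}
  have hD : ∀ k, DC k (D k) := fun k => DC_all (U_finite k) _
    fun u _ => DC_dec (fun B => B ∈ rej k u) (hrej k u)
  let G1 : ℕ → List ℕ → Set SE := fun k u => {B | B ∈ rej k u ∨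
    ∀ δ ∈ F k, ∃ j ≥ k + 1, ∃ i, u ++ [i] ∈ U j ∧ B * δ ∈ live j (u ++ [i])}
  have hG1 : ∀ k, ∀ u ∈ U k, DC k (G1 k u) := by
    intro k u hu
    constructor
    · rintro B (hB | hB) γ hγ
      · exact Or.inl (hrej k u B hB γ hγ)
      · right; intro α hα; rw [mul_assoc]; exact hB _ (mul_F hγ hα)
    · intro B
      obtain ⟨γ, h1, h2⟩ := FA D (fun k _ => hD k) (n := k) B
      obtain ⟨γ', h3, h4⟩ := openRamsey (k := k)
        (fun j => {B | k + 1 ≤ j ∧ ∃ i, u ++ [i] ∈ U j ∧ B ∈ live j (u ++ [i])}) (by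
          rintro j _ B ⟨hj, i, hi, hB⟩ ε hε
          exact ⟨hj, i, hi, hlive _ _ B hB ε hε⟩) (B * γ)
      refine ⟨γ * γ', mul_F h1 h3, ?_⟩
      rw [← mul_assoc]
      rcases h4 with h4 | h4
      · right
        intro δ hδ
        obtain ⟨j, _, hj, i, hi⟩ := h4 δ hδ
        exact ⟨j, hj, i, hi⟩
      · left
        rintro δ hδ ⟨w, hw, hw'⟩
        apply h4 δ hδ
        have hi := Ext_succ hw
        set u' := u ++ [w u.length] with hu'
        set j := max (k + 1) (Encodable.encode u')
        have hj : u' ∈ U j := le_max_right (k + 1) _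
        refine ⟨j, by omega, by omega, w u.length, hj, ?_⟩
        have := h2 (γ' * δ) j (by omega) u' hj
        rw [← mul_assoc] at this
        refine this.resolve_left fun hr => hr 1 (one_F j) ⟨w, hi, ?_⟩
        rw [hw', mul_one]
  let G : ℕ → Set SE := fun k => {B | ∀ u ∈ U k, B ∈ G1 k u}
  have hG : ∀ k ≥ n, DC k (G k) := fun k _ => DC_all (U_finite k) _ (hG1 k)
  obtain ⟨γ, hγ, hA⟩ := FA G hG B
  refine ⟨γ, hγ, ?_⟩
  have h0 := hA 1 n le_rfl [] (nil_U n)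
  rw [mul_one] at h0
  rcases h0 with h0 | h0
  · right
    rintro δ hδ ⟨w, hw⟩
    exact h0 δ hδ ⟨w, Ext_nil w, hw⟩
  · left
    intro δ hδ
    set A := B * γ * δ with hAdef
    -- states
    let St := {p : ℕ × List ℕ // n ≤ p.1 ∧ p.2 ∈ U p.1 ∧ A ∈ live p.1 p.2}
    have hnext : ∀ p : St, ∃ q : St, p.1.1 < q.1.1 ∧ ∃ i, q.1.2 = p.1.2 ++ [i] := by
      rintro ⟨⟨k, u⟩, hk, hu, hl⟩
      rcases hA δ k hk u hu with h1 | h1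
      · exact absurd (by rwa [mul_one]) (hl 1 (one_F k))
      · obtain ⟨j, hj, i, hi, hl'⟩ := h1 1 (one_F k)
        rw [mul_one] at hl'
        dsimp only at hk hu hl
        exact ⟨⟨(j, u ++ [i]), by dsimp only; omega, hi, hl'⟩, by dsimp only; omega, i, rfl⟩
    obtain ⟨j0, hj0, i0, hi0, hl0⟩ := h0 δ hδ
    choose nx hnx hnx' using hnext
    let s : ℕ → St := fun t => Nat.rec ⟨(j0, [] ++ [i0]), by dsimp only; omega, hi0, hl0⟩
      (fun _ p => nx p) t
    have hs : ∀ t, s (t + 1) = nx (s t) := fun t => rfl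
    have hslen : ∀ t, (s t).1.2.length = t + 1 := by
      intro t
      induction t with
      | zero => rfl
      | succ t ih =>
        rw [hs]
        obtain ⟨i, hi⟩ := hnx' (s t)
        rw [hi]; simp [ih]
    have hslev : ∀ t, t ≤ (s t).1.1 := by
      intro t
      induction t with
      | zero => omega
      | succ t ih =>
        rw [hs]
        have := hnx (s t); omega
    let w : ℕ → ℕ := fun i => (s i).1.2.getD i 0
    have hpre : ∀ t d, ∃ v, (s (t + d)).1.2 = (s t).1.2 ++ v := by
      intro t d
      induction d with
      | zero => exact ⟨[], by simp⟩
      | succ d ih =>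
        obtain ⟨v, hv⟩ := ih
        obtain ⟨i, hi⟩ := hnx' (s (t + d))
        rw [← add_assoc, hs, hi, hv]
        exact ⟨v ++ [i], by simp⟩
    have hw : ∀ t, Ext (s t).1.2 w := by
      intro t i hi
      rw [hslen] at hi
      obtain ⟨v, hv⟩ := hpre i (t - i)
      rw [show i + (t - i) = t by omega] at hv
      rw [hv, List.getD_append _ _ _ _ (by rw [hslen]; omega)]
    refine ⟨w, ext' fun x => ?_⟩
    obtain ⟨N, hN⟩ := hc w x
    set t := max N (x.length + 1)
    have hl := (s t).2.2.2 1 (one_F _)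
    have : ∃ γ ∈ F (s t).1.1, A * γ ∈ X (s t).1.2 := by
      by_contra hcon
      push Not at hcon
      apply hl
      rw [mul_one]
      exact hcon
    obtain ⟨ε, hε, w', hw', hhw'⟩ := this
    have h5 : h w' x = h w x := hN w' fun i hi => by
      have hit : i < (s t).1.2.length := by rw [hslen]; omega
      rw [← hw' i hit, hw t i hit]
    rw [← h5, hhw', mul_apply, hε x (by have := hslev t; omega)]

end SE


namespace SE
open MeasureTheory Topology

noncomputable def enc : List Bool ≃ ℕ := (nonempty_equiv_of_countable (α := List Bool) (β := ℕ)).some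

noncomputable def code (α : SE) : List Bool → ℕ := fun x => enc (α x)

noncomputable instance : TopologicalSpace SE := TopologicalSpace.induced code inferInstance

theorem continuous_code : Continuous code := continuous_induced_dom

theorem continuous_eval (x : List Bool) : Continuous (fun α : SE => enc (α x)) :=
  (continuous_apply x).comp continuous_code

theorem continuous_of {T : Type*} [TopologicalSpace T] {h : T → SE}
    (hh : ∀ x, Continuous fun t => enc (h t x)) : Continuous h :=
  continuous_induced_rng.2 (continuous_pi hh)

theorem clopen_eval {T : Type*} [TopologicalSpace T] {h : T → SE} (hh : Continuous h)
    (x : List Bool) (S : Set (List Bool)) : IsClopen {t | h t x ∈ S} := by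
  have : {t | h t x ∈ S} = (fun t => enc (h t x)) ⁻¹' (enc.symm ⁻¹' S) := by ext t; simp
  rw [this]
  exact (isClopen_discrete _).preimage ((continuous_eval x).comp hh)

theorem code_inj : Function.Injective code := by
  intro α β h
  exact ext' fun x => enc.injective (congrFun h x)

theorem isClosedEmbedding_code : IsClosedEmbedding code := by
  refine ⟨⟨⟨rfl⟩, code_inj⟩, ?_⟩
  have : Set.range code = (⋂ x : List Bool, ⋂ y : List Bool, {g : List Bool → ℕ | x.length = y.length →
      (enc.symm (g x)).length = (enc.symm (g y)).length}) ∩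
      ⋂ x : List Bool, ⋂ i : Bool, {g | (enc.symm (g x) ++ [i]) <+: enc.symm (g (x ++ [i]))} := by
    ext g
    simp only [Set.mem_range, Set.mem_inter_iff, Set.mem_iInter]
    constructor
    · rintro ⟨α, rfl⟩
      simp only [code, Set.mem_ofPred_eq, Equiv.symm_apply_apply]
      exact ⟨α.lev, α.step⟩
    · rintro ⟨h1, h2⟩
      exact ⟨⟨fun x => enc.symm (g x), h1, h2⟩, by funext x; simp [code]⟩
  rw [this]
  refine (isClosed_iInter fun x => isClosed_iInter fun y => ?_).inter
    (isClosed_iInter fun x => isClosed_iInter fun i => ?_)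
  · have : Continuous fun g : List Bool → ℕ => (g x, g y) := by fun_prop
    exact (isClosed_discrete {p : ℕ × ℕ | x.length = y.length →
      (enc.symm p.1).length = (enc.symm p.2).length}).preimage this
  · have : Continuous fun g : List Bool → ℕ => (g x, g (x ++ [i])) := by fun_prop
    exact (isClosed_discrete {p : ℕ × ℕ | (enc.symm p.1 ++ [i]) <+: enc.symm p.2}).preimage this

instance : PolishSpace SE := isClosedEmbedding_code.polishSpace
noncomputable instance : MeasurableSpace SE := borel SE
instance : BorelSpace SE := ⟨rfl⟩

instance : ContinuousMul SE := ⟨by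
  apply continuous_of
  intro x
  apply continuous_def.2
  intro S _
  have : (fun t : SE × SE => enc ((t.1 * t.2) x)) ⁻¹' S =
      ⋃ y : List Bool, {t : SE × SE | t.2 x ∈ ({y} : Set _)} ∩ {t : SE × SE | t.1 y ∈ enc ⁻¹' S} := by
    ext t
    simp
  rw [this]
  exact isOpen_iUnion fun y => (clopen_eval continuous_snd x _).isOpen.inter
    (clopen_eval continuous_fst y _).isOpen⟩

theorem isClosed_tr {T : Type*} [TopologicalSpace T] {h : T → SE} (hh : Continuous h) (k : ℕ)
    (τ : SE) : IsClosed {t | tr k (h t) τ} := by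
  have : {t | tr k (h t) τ} = ⋂ x, {t | h t x ∈ {y : List Bool | y.take k = (τ x).take k}} := by
    ext t; simp [tr]
  rw [this]
  exact isClosed_iInter fun x => (clopen_eval hh x _).isClosed

theorem isClosed_Ext {T : Type*} [TopologicalSpace T] {h : T → ℕ → ℕ} (hh : Continuous h)
    (u : List ℕ) : IsClosed {t | Ext u (h t)} := by
  have : {t | Ext u (h t)} = ⋂ i : ℕ, ⋂ _ : i < u.length, {t | u.getD i 0 = h t i} := by
    ext t; simp [Ext]
  rw [this]
  exact isClosed_iInter fun i => isClosed_iInter fun _ =>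
    isClosed_eq continuous_const ((continuous_apply i).comp hh)

/-- Continuity on Baire space, combinatorial form. -/
theorem cont_comb {h : (ℕ → ℕ) → SE} (hh : Continuous h) (w : ℕ → ℕ) (x : List Bool) :
    ∃ n, ∀ w' : ℕ → ℕ, (∀ i < n, w' i = w i) → h w' x = h w x := by
  have h1 := (clopen_eval hh x {h w x}).isOpen
  rw [PiNat.isOpen_iff_dist] at h1
  obtain ⟨ε, hε, h2⟩ := h1 w rfl
  obtain ⟨n, hn⟩ := exists_pow_lt_of_lt_one hε (by norm_num : (1 / 2 : ℝ) < 1)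
  refine ⟨n, fun w' hw' => h2 w' (lt_of_le_of_lt ?_ hn)⟩
  rw [← PiNat.mem_cylinder_iff_dist_le, PiNat.mem_cylinder_iff]
  exact fun i hi => (hw' i hi).symm

theorem MR {Y : Type*} [TopologicalSpace Y] [PolishSpace Y] [MeasurableSpace Y] [BorelSpace Y]
    (M : Set (SE × Y)) (hM : MeasurableSet M) (n : ℕ) (B : SE) :
    ∃ γ ∈ F n, Dec n (fun C => ∃ y, (C, y) ∈ M) (B * γ) := by
  have h1 : AnalyticSet (Prod.fst '' M) := hM.analyticSet.image_of_continuous continuous_fst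
  have h2 : ∀ C, (∃ y, (C, y) ∈ M) ↔ C ∈ Prod.fst '' M := by intro C; simp
  simp only [h2]
  rw [AnalyticSet] at h1
  rcases h1 with h1 | ⟨h, hc, hr⟩
  · refine ⟨1, one_F n, Or.inr ?_⟩
    simp [h1]
  · rw [← hr]
    exact MR_aux h (cont_comb hc) n B

end SE


namespace SE
open MeasureTheory Topology

theorem lv_mul (α β : SE) (i : ℕ) : (α * β).lv i = α.lv (β.lv i) := by
  change (α (β (List.replicate i false))).length = _
  rw [length_eq]; rfl

theorem mul_left_cancel' {B α β : SE} (h : B * α = B * β) : α = β := by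
  apply ext'
  intro x
  apply B.inj
  exact congrArg (fun γ : SE => γ x) h

theorem up_mul {j : ℕ} {γ δ : SE} (hδ : δ ∈ F j) : up j (γ * δ) = up j γ := by
  unfold up
  split_ifs with h
  · rfl
  · rw [lv_mul]
    have : δ.lv (j - 1) = j - 1 := by
      unfold lv
      rw [hδ _ (by simp; omega)]; simp
    rw [this]

theorem tr_up {j : ℕ} {α β : SE} (γ : SE) (h : tr j α β) : tr (up j γ) (γ * α) (γ * β) := by
  intro x
  rcases lt_or_ge (α x).length j with hx | hx
  · have := tr_short h hx
    rw [mul_apply, mul_apply, this]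
  · have h1 := h x
    have hp : ((α x).take j).length = j := by simp; omega
    have h2 : γ ((α x).take j) <+: γ (α x) := γ.mono (List.take_prefix _ _)
    have h3 : γ ((α x).take j) <+: γ (β x) := by rw [h1]; exact γ.mono (List.take_prefix _ _)
    have h4 : up j γ ≤ (γ ((α x).take j)).length := by
      rw [length_eq, hp]
      by_contra hc
      have := lt_up_iff.2 (not_le.1 hc)
      omega
    obtain ⟨t, ht⟩ := h2
    obtain ⟨t', ht'⟩ := h3
    rw [mul_apply, mul_apply, ← ht, ← ht', List.take_append_of_le_length h4,
      List.take_append_of_le_length h4]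

theorem nl_up_mul {j : ℕ} (γ s : SE) : nl (up j γ) (γ * s) = nl j s := by
  apply nl_eq_of
  intro i
  rw [lv_mul, ← lt_up_iff, lt_nl_iff]

/-- The combinatorial heart: two different ways of moving `y` off. -/
theorem lemS {k : ℕ} (α₀ : SE) (y : List Bool) (hy : y.length = k) (hyr : ∀ v, α₀ v ≠ y) :
    ∃ γ₁ ∈ F k, ∀ δ₁ ∈ F (k + 1), ∃ γ₂ ∈ F k, γ₂ y ≠ γ₁ y ∧
      ∃ ε ∈ F (nl (k + 1) α₀), γ₂ * mx (k + 1) α₀ = γ₁ * δ₁ * mx (k + 1) α₀ * ε := by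
  classical
  set τ := mx (k + 1) α₀ with hτ
  have hττ : tr (k + 1) τ α₀ := mx_tr _ _
  have hyτ : ∀ v, τ v ≠ y := by
    intro v hv
    have := tr_short hττ (x := v) (by rw [hv]; omega)
    exact hyr v (this.trans hv)
  by_cases hk : ∃ c, (τ c).length = k
  · obtain ⟨c, hc⟩ := hk
    let γ₁ : SE := ins k (fun _ t => false :: t) (by intros; simpa) (by intros; simp)
    let η : SE := ins k (fun x t => (if x = y then true else false) :: t)
      (by intros; simpa) (by intros; simp)
    refine ⟨γ₁, ins_F, fun δ hδ => ⟨η * δ, mul_F ins_F (F_anti (Nat.le_succ k) hδ), ?_, 1,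
      one_F _, ?_⟩⟩
    · rw [mul_apply, hδ y (by omega), ins_ge hy.ge, ins_ge hy.ge]
      simp [← hy]
    · rw [mul_one]
      apply ext'
      intro v
      simp only [mul_apply]
      rcases lt_or_ge (δ (τ v)).length k with h | h
      · rw [ins_F _ h, ins_F _ h]
      · rw [ins_ge h, ins_ge h]
        have hne : (δ (τ v)).take k ≠ y := by
          rw [take_F (F_anti (Nat.le_succ k) hδ)]
          intro hcon
          have hlen : k ≤ (τ v).length := by
            have := congrArg List.length hcon
            simp at this; omega
          have hcv : c.length ≤ v.length := by
            apply τ.lv_strictMono.le_iff_le.1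
            rw [← length_eq, ← length_eq]; omega
          have h1 : τ (v.take c.length) <+: τ v := τ.mono (List.take_prefix _ _)
          have h2 : (τ (v.take c.length)).length = k := by
            rw [← hc]; exact τ.lev _ _ (by simp; omega)
          have h3 := List.prefix_iff_eq_take.1 h1
          rw [h2] at h3
          exact hyτ _ (h3.trans hcon)
        simp [hne]
  · push Not at hk
    let sx : List Bool → Bool := fun x => decide (∃ v, (x ++ [true]) <+: τ v)
    let ζ : SE := ins k (fun x t => sx x :: t) (by intros; simpa) (by intros; simp)
    have huniq : ∀ x b v, x.length = k → (x ++ [b]) <+: τ v → sx x = b := by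
      intro x b v hx hv
      cases b with
      | true => simp only [sx, decide_eq_true_eq]; exact ⟨v, hv⟩
      | false =>
        simp only [sx, decide_eq_false_iff_not]
        rintro ⟨v', hv'⟩
        set a := v ++ List.replicate v'.length false with ha
        set b := v' ++ List.replicate v.length false with hb
        have h1 : (x ++ [false]) <+: τ a := hv.trans (τ.mono (List.prefix_append _ _))
        have h2 : (x ++ [true]) <+: τ b := hv'.trans (τ.mono (List.prefix_append _ _))
        have hne : a ≠ b := by
          intro hab
          rw [← hab] at h2
          exact prefix_diff (i := false) h1 h2
        obtain ⟨c, i, h3, h4⟩ := split_diff (by simp [ha, hb]; omega) hne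
        have h5 := τ.step_prefix h3
        have h6 := τ.step_prefix h4
        -- compare `τ c` and `x`
        have hcx : (τ c).length ≠ x.length := by rw [hx]; exact hk c
        rcases lt_or_gt_of_ne hcx with hlt | hgt
        · have h7 : (τ c ++ [i]) <+: x :=
            List.prefix_of_prefix_length_le h5 ((List.prefix_append _ _).trans h1) (by simp; omega)
          have h8 : (τ c ++ [!i]) <+: x :=
            List.prefix_of_prefix_length_le h6 ((List.prefix_append _ _).trans h2) (by simp; omega)
          exact prefix_diff h7 h8
        · have h7 : (x ++ [false]) <+: τ c :=
            List.prefix_of_prefix_length_le h1 ((List.prefix_append _ _).trans h5) (by simp; omega)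
          have h8 : (x ++ [true]) <+: τ c :=
            List.prefix_of_prefix_length_le h2 ((List.prefix_append _ _).trans h6) (by simp; omega)
          exact prefix_diff (i := false) h7 h8
    have hζ : tr (k + 1) (ζ * τ) τ := by
      intro v
      rw [mul_apply]
      rcases lt_trichotomy (τ v).length k with h | h | h
      · rw [ins_F _ h]
      · exact absurd h (hk v)
      · rw [ins_ge h.le]
        have h1 : ((τ v).take k ++ [(τ v)[k]]) = (τ v).take (k + 1) := List.take_concat_get' _ _ _
        have hx : ((τ v).take k).length = k := by simp; omega
        rw [huniq _ (τ v)[k] v hx (by rw [h1]; exact List.take_prefix _ _), ← h1,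
          List.take_append, List.take_of_length_le (by omega), hx]
        simp
    obtain ⟨ε, h1, h2⟩ := mx_fac_tr (hζ.trans hττ)
    refine ⟨1, one_F k, fun δ hδ => ⟨δ * ζ, mul_F (F_anti (Nat.le_succ k) hδ) ins_F, ?_,
      ε, h1, ?_⟩⟩
    · intro hcon
      have := congrArg List.length hcon
      have h3 := δ.length_le (ζ y)
      rw [mul_apply, one_apply] at this
      have h4 : (ζ y).length = k + 1 := by
        rw [ins_ge hy.ge]
        simp [hy]
      change (δ (ζ y)).length = y.length at this
      omega
    · rw [mul_assoc, h2, one_mul, mul_assoc]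

section
variable (g : (ℕ → ℕ) → SE × SE)

def Wt (B : SE) (k : ℕ) (τ τ' : SE) (u : List ℕ) : Prop :=
  ∃ w α α', Ext u w ∧ tr k α τ ∧ tr k α' τ' ∧ g w = (B * α, B * α')

def P2 (B : SE) (m : ℕ) (τ' : SE) (u : List ℕ) (f : SE) : Prop :=
  ∃ w₁ w₂ α₁ α₂, Ext u w₁ ∧ Ext u w₂ ∧ tr m α₁ τ' ∧ tr m α₂ τ' ∧ α₁ ≠ α₂ ∧
    g w₁ = (f, B * α₁) ∧ g w₂ = (f, B * α₂)

/-- everything relevant is decided -/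
def Hyp (n : ℕ) (B : SE) : Prop := ∀ α, ∀ k ≥ n, ∀ u ∈ U k, ∀ τ τ',
  Dec k (fun C => Wt g C k τ τ' u) (B * α) ∧ Dec k (fun C => Wt g C (k + 1) τ τ' u) (B * α)

variable {g}

theorem Hyp.mul {n : ℕ} {B : SE} (h : Hyp g n B) (γ : SE) : Hyp g n (B * γ) := by
  intro α
  rw [mul_assoc]
  exact h (γ * α)

theorem Wt_congr {B : SE} {k : ℕ} {τ τ' σ σ' : SE} {u : List ℕ} (h : tr k τ σ) (h' : tr k τ' σ')
    (hW : Wt g B k τ τ' u) : Wt g B k σ σ' u := by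
  obtain ⟨w, α, α', h1, h2, h3, h4⟩ := hW
  exact ⟨w, α, α', h1, h2.trans h, h3.trans h', h4⟩

theorem P2.congr {B : SE} {m : ℕ} {τ' σ' : SE} {u : List ℕ} {f : SE} (h : tr m τ' σ')
    (hP : P2 g B m τ' u f) : P2 g B m σ' u f := by
  obtain ⟨w₁, w₂, α₁, α₂, h1, h2, h3, h4, h5⟩ := hP
  exact ⟨w₁, w₂, α₁, α₂, h1, h2, h3.trans h, h4.trans h, h5⟩

theorem P2.of_mul {B γ : SE} {m : ℕ} (hγ : γ ∈ F m) {τ' : SE} {u : List ℕ} {f : SE}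
    (hP : P2 g (B * γ) m τ' u f) : P2 g B m τ' u f := by
  obtain ⟨w₁, w₂, α₁, α₂, h1, h2, h3, h4, h5, h6, h7⟩ := hP
  refine ⟨w₁, w₂, γ * α₁, γ * α₂, h1, h2, (tr_F hγ _).trans h3, (tr_F hγ _).trans h4,
    fun h => h5 (mul_left_cancel' h), ?_, ?_⟩
  · rw [h6, mul_assoc]
  · rw [h7, mul_assoc]

theorem Wt_dec (hg : Continuous g) (k k' : ℕ) (τ τ' : SE) (u : List ℕ) :
    DC k {B | Dec k (fun C => Wt g C k' τ τ' u) B} := by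
  refine ⟨fun B hB γ hγ => by
    have hB' : Dec k (fun C => Wt g C k' τ τ' u) B := hB
    exact hB'.mul hγ, fun B => ?_⟩
  have := MR (Y := (ℕ → ℕ) × SE × SE) {p | Ext u p.2.1 ∧ tr k' p.2.2.1 τ ∧ tr k' p.2.2.2 τ' ∧
      g p.2.1 = (p.1 * p.2.2.1, p.1 * p.2.2.2)} (IsClosed.measurableSet (by
    refine (isClosed_Ext (by fun_prop) u).inter ((isClosed_tr (by fun_prop) k' τ).inter
      ((isClosed_tr (by fun_prop) k' τ').inter (isClosed_eq (by fun_prop) (by fun_prop))))) ) k B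
  obtain ⟨γ, h1, h2⟩ := this
  refine ⟨γ, h1, ?_⟩
  convert h2 using 2
  simp [Wt]

theorem exists_Hyp (hg : Continuous g) (n : ℕ) (B : SE) : ∃ γ ∈ F n, Hyp g n (B * γ) := by
  let S : ℕ → ℕ → Set (List ℕ × SE × SE) := fun k k' => U k ×ˢ Set.range (mx k') ×ˢ Set.range (mx k')
  have hS : ∀ k k', (S k k').Finite := fun k k' =>
    (U_finite k).prod ((range_mx_finite k').prod (range_mx_finite k'))
  let D : ℕ → ℕ → Set SE := fun k k' => {B | ∀ p ∈ S k k', B ∈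
    {B | Dec k (fun C => Wt g C k' p.2.1 p.2.2 p.1) B}}
  have hD : ∀ k k', DC k (D k k') := fun k k' => DC_all (hS k k') _ fun p _ => Wt_dec hg _ _ _ _ _
  obtain ⟨γ, h1, h2⟩ := FA (n := n) (fun k => D k k ∩ D k (k + 1))
    (fun k _ => (hD k k).inter (hD k (k + 1))) B
  have key : ∀ k k' C, C ∈ D k k' → ∀ u ∈ U k, ∀ τ τ', Dec k (fun C => Wt g C k' τ τ' u) C := by
    intro k k' C hC u hu τ τ'
    have := hC (u, mx k' τ, mx k' τ') ⟨hu, ⟨τ, rfl⟩, ⟨τ', rfl⟩⟩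
    have e : ∀ C, Wt g C k' (mx k' τ) (mx k' τ') u ↔ Wt g C k' τ τ' u := fun C =>
      ⟨Wt_congr (mx_tr _ _) (mx_tr _ _), Wt_congr (mx_tr _ _).symm (mx_tr _ _).symm⟩
    simpa [e] using this
  refine ⟨γ, h1, fun α k hk u hu τ τ' => ?_⟩
  exact ⟨key k k _ (h2 α k hk).1 u hu τ τ', key k (k + 1) _ (h2 α k hk).2 u hu τ τ'⟩

theorem pure_step (hg : Continuous g) {k : ℕ} {B γ₁ : SE} {α₀ α₀' : SE} {u : List ℕ}
    (hW : ∀ γ ∈ F k, Wt g (B * γ) (k + 1) α₀ α₀' u) (hγ₁ : γ₁ ∈ F k) :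
    ∃ δ₁ ∈ F (k + 1), ∀ ε ∈ F (nl (k + 1) α₀), ∃ w α', Ext u w ∧ tr (k + 1) α' α₀' ∧
      g w = (B * (γ₁ * δ₁ * mx (k + 1) α₀ * ε), B * (γ₁ * α')) := by
  set τ := mx (k + 1) α₀ with hτ
  obtain ⟨δ₁, h1, h2⟩ := MR (Y := (ℕ → ℕ) × SE) {p | Ext u p.2.1 ∧ tr (k + 1) p.2.2 α₀' ∧
      g p.2.1 = (p.1 * τ, B * γ₁ * p.2.2)} (IsClosed.measurableSet (by
    refine (isClosed_Ext (by fun_prop) u).inter ((isClosed_tr (by fun_prop) (k + 1) α₀').inter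
      (isClosed_eq (by fun_prop) (by fun_prop))))) (k + 1) (B * γ₁)
  refine ⟨δ₁, h1, ?_⟩
  rcases h2 with h2 | h2
  · intro ε hε
    obtain ⟨δ, h3, h4⟩ := mx_left hε
    obtain ⟨⟨w, α'⟩, h5, h6, h7⟩ := h2 δ h3
    refine ⟨w, α', h5, h6, ?_⟩
    dsimp only at h7
    rw [h7, mul_assoc (γ₁ * δ₁), ← h4]
    simp only [mul_assoc]
    rfl
  · exfalso
    obtain ⟨w, α, α', h3, h4, h5, h6⟩ := hW (γ₁ * δ₁) (mul_F hγ₁ (F_anti (Nat.le_succ k) h1))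
    obtain ⟨ε, h7, h8⟩ := mx_fac_tr h4
    obtain ⟨δ, h9, h10⟩ := mx_left h7
    apply h2 δ h9
    refine ⟨(w, δ₁ * α'), h3, (tr_F h1 α').trans h5, ?_⟩
    dsimp only
    rw [h6, h8, ← h10]
    simp only [mul_assoc]
    rfl

theorem split (hg : Continuous g) (hBad : ∀ w, Bad (g w).1 (g w).2) {n m : ℕ} {B : SE}
    (hB : Hyp g n B) (hm : n ≤ m) {τ τ' : SE} {u : List ℕ} (hu : u ∈ U m)
    (hW : Wt g B m τ τ' u) : ∃ α, tr m α τ ∧ P2 g B m τ' u (B * α) := by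
  obtain ⟨w, α₀, α₀', h1, h2, h3, h4⟩ := hW
  have hb := hBad w
  rw [h4] at hb
  obtain ⟨z, hz, hz'⟩ := hb (B.lv m)
  set y := α₀' z with hy
  have hmk : m ≤ y.length := by
    rw [mul_apply, length_eq] at hz
    exact B.lv_strictMono.le_iff_le.1 hz
  have hyr : ∀ v, α₀ v ≠ y := by
    intro v hv
    apply hz' v
    rw [mul_apply, mul_apply, hv]
  set k := y.length with hk
  have hW1 : ∀ γ ∈ F k, Wt g (B * γ) (k + 1) α₀ α₀' u := by
    have := (hB 1 k (hm.trans hmk) u (U_mono hmk hu) α₀ α₀').2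
    rw [mul_one] at this
    rcases this with h | h
    · exact h
    · refine absurd ?_ (h 1 (one_F k))
      rw [mul_one]
      exact ⟨w, α₀, α₀', h1, tr_refl _ _, tr_refl _ _, h4⟩
  obtain ⟨γ₁, hγ₁, hS⟩ := lemS α₀ y hk.symm hyr
  obtain ⟨δ₁, hδ₁, hp1⟩ := pure_step hg hW1 hγ₁
  obtain ⟨γ₂, hγ₂, hne, ε, hε, hεe⟩ := hS δ₁ hδ₁
  obtain ⟨δ₂, hδ₂, hp2⟩ := pure_step hg hW1 hγ₂
  obtain ⟨ε', hε', hεe'⟩ := mx_right (α := α₀) hδ₂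
  obtain ⟨w₁, α₁, a1, a2, a3⟩ := hp1 (ε * ε') (mul_F hε hε')
  obtain ⟨w₂, α₂, b1, b2, b3⟩ := hp2 1 (one_F _)
  have hz1 : ∀ α, tr (k + 1) α α₀' → α z = y := by
    intro α hα
    exact tr_short hα.symm (by show y.length < k + 1; omega)
  have htr : ∀ γ ∈ F k, ∀ α, tr (k + 1) α α₀' → tr m (γ * α) τ' := by
    intro γ hγ α hα
    exact (tr_F (F_anti hmk hγ) α).trans ((hα.anti (by omega)).trans h3)
  refine ⟨γ₂ * δ₂ * mx (k + 1) α₀, ?_, w₁, w₂, γ₁ * α₁, γ₂ * α₂, a1, b1, htr _ hγ₁ _ a2,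
    htr _ hγ₂ _ b2, ?_, ?_, ?_⟩
  · refine (tr_F (F_anti hmk (mul_F hγ₂ (F_anti (Nat.le_succ k) hδ₂))) _).trans ?_
    exact ((mx_tr (k + 1) α₀).anti (by omega)).trans h2
  · intro hcon
    have := congrArg (fun γ : SE => γ z) hcon
    simp only [mul_apply, hz1 _ a2, hz1 _ b2] at this
    exact hne this.symm
  · rw [a3, mul_assoc γ₂, hεe', ← mul_assoc γ₂, hεe, mul_assoc _ ε]
  · rw [b3, mul_one]

theorem E_closed {B : SE} {j m : ℕ} {σ τ' : SE} {u : List ℕ} {γ δ : SE} (hγ : up j γ = m)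
    (hδ : δ ∈ F j) (h : Wt g B m (γ * mx j σ) τ' u →
      ∀ ε ∈ F (nl j σ), P2 g B m τ' u (B * γ * mx j σ * ε)) :
    Wt g B m (γ * δ * mx j σ) τ' u →
      ∀ ε ∈ F (nl j σ), P2 g B m τ' u (B * (γ * δ) * mx j σ * ε) := by
  intro hW ε hε
  have h1 : tr m (γ * δ * mx j σ) (γ * mx j σ) := by
    rw [← hγ, mul_assoc]
    exact tr_up γ (tr_F hδ _)
  obtain ⟨ε', h2, h3⟩ := mx_right (α := σ) hδ
  have := h (Wt_congr h1 (tr_refl _ _) hW) (ε' * ε) (mul_F h2 hε)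
  have e : B * (γ * δ) * mx j σ * ε = B * γ * mx j σ * (ε' * ε) := by
    rw [← mul_assoc B, mul_assoc _ δ, h3]
    simp only [mul_assoc]
  rw [e]; exact this

theorem E_DC (hg : Continuous g) (hBad : ∀ w, Bad (g w).1 (g w).2) {n j m : ℕ} {B : SE}
    (hB : Hyp g n B) (hj : n ≤ j) (σ τ' : SE) {u : List ℕ} (hu : u ∈ U j) :
    DC j {γ | up j γ = m → Wt g B m (γ * mx j σ) τ' u →
      ∀ ε ∈ F (nl j σ), P2 g B m τ' u (B * γ * mx j σ * ε)} := by
  constructor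
  · intro γ hγ δ hδ hup
    have hup' := up_mul (γ := γ) hδ
    exact E_closed (by omega) hδ (hγ (by omega))
  · intro γ
    by_cases hup : up j γ = m
    swap
    · exact ⟨1, one_F j, fun h => by rw [mul_one] at h; exact absurd h hup⟩
    by_cases hW : Wt g B m (γ * mx j σ) τ' u
    swap
    · refine ⟨1, one_F j, fun _ h => ?_⟩
      rw [mul_one] at h; exact absurd h hW
    set s := mx j σ with hs
    have hjm : j ≤ m := by rw [← hup]; exact le_up j γ
    obtain ⟨δ, hδ, hdec⟩ := MR (Y := (ℕ → ℕ) × (ℕ → ℕ) × SE × SE)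
      {p | Ext u p.2.1 ∧ Ext u p.2.2.1 ∧ tr m p.2.2.2.1 τ' ∧ tr m p.2.2.2.2 τ' ∧
        p.2.2.2.1 ≠ p.2.2.2.2 ∧ g p.2.1 = (p.1 * s, B * p.2.2.2.1) ∧
        g p.2.2.1 = (p.1 * s, B * p.2.2.2.2)} (by
      refine (isClosed_Ext (by fun_prop) u).measurableSet.inter
        ((isClosed_Ext (by fun_prop) u).measurableSet.inter
        ((isClosed_tr (by fun_prop) m τ').measurableSet.inter
        ((isClosed_tr (by fun_prop) m τ').measurableSet.inter
        ((isClosed_eq (by fun_prop) (by fun_prop)).measurableSet.compl.inter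
        ((isClosed_eq (by fun_prop) (by fun_prop)).measurableSet.inter
        (isClosed_eq (by fun_prop) (by fun_prop)).measurableSet)))))) j (B * γ)
    have e : ∀ C : SE, (∃ y : (ℕ → ℕ) × (ℕ → ℕ) × SE × SE, (C, y) ∈
      {p : SE × (ℕ → ℕ) × (ℕ → ℕ) × SE × SE |
        Ext u p.2.1 ∧ Ext u p.2.2.1 ∧ tr m p.2.2.2.1 τ' ∧ tr m p.2.2.2.2 τ' ∧
        p.2.2.2.1 ≠ p.2.2.2.2 ∧ g p.2.1 = (p.1 * s, B * p.2.2.2.1) ∧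
        g p.2.2.1 = (p.1 * s, B * p.2.2.2.2)}) ↔ P2 g B m τ' u (C * s) := by
      intro C
      simp [P2]
    simp only [e] at hdec
    refine ⟨δ, hδ, fun _ _ => ?_⟩
    rcases hdec with hdec | hdec
    · intro ε hε
      obtain ⟨ε', h1, h2⟩ := mx_left hε
      rw [mul_assoc _ _ ε, ← h2, ← mul_assoc, ← mul_assoc]
      exact hdec ε' h1
    · exfalso
      have htr : tr m (γ * δ * s) (γ * s) := by
        rw [← hup, mul_assoc]
        exact tr_up γ (tr_F hδ _)
      have hnl : nl m (γ * s) = nl j σ := by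
        rw [← hup, nl_up_mul, hs, nl_mx]
      obtain ⟨ε₁, h1, h2⟩ := mx_fac_tr htr
      obtain ⟨γ', h3, h4⟩ := mx_left h1
      have hW' : Wt g (B * γ') m (γ * s) τ' u := by
        have := (hB 1 m (hj.trans hjm) u (U_mono hjm hu) (γ * s) τ').1
        rw [mul_one] at this
        rcases this with h | h
        · exact h γ' h3
        · exact absurd (by rwa [mul_one]) (h 1 (one_F m))
      obtain ⟨α, h5, h6⟩ := split hg hBad (hB.mul γ') (hj.trans hjm) (U_mono hjm hu) hW'
      have h7 := h6.of_mul h3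
      obtain ⟨ε₂, h8, h9⟩ := mx_fac_tr h5
      rw [hnl] at h8
      obtain ⟨ε', h10, h11⟩ := mx_left h8
      apply hdec ε' h10
      have : B * γ * δ * ε' * s = B * γ' * α := by
        rw [h9, mul_assoc _ ε', hs, h11, ← hs, mul_assoc B γ', ← mul_assoc γ', h4, ← h2]
        simp only [mul_assoc]
      rw [this]; exact h7

theorem exists_E (hg : Continuous g) (hBad : ∀ w, Bad (g w).1 (g w).2) {n : ℕ} {B : SE}
    (hB : Hyp g n B) : ∃ γ ∈ F n, ∀ j ≥ n, ∀ u ∈ U j, ∀ σ τ',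
      Wt g B (up j γ) (γ * mx j σ) τ' u →
      ∀ ε ∈ F (nl j σ), P2 g B (up j γ) τ' u (B * γ * mx j σ * ε) := by
  obtain ⟨γ, h1, h2⟩ := FA (n := n) (fun j => {γ | ∀ u ∈ U j, ∀ σ τ',
      Wt g B (up j γ) (γ * mx j σ) τ' u →
      ∀ ε ∈ F (nl j σ), P2 g B (up j γ) τ' u (B * γ * mx j σ * ε)}) (by
    intro j hj
    constructor
    · intro γ hγ δ hδ u hu σ τ'
      rw [up_mul hδ]
      exact E_closed rfl hδ (hγ u hu σ τ')
    · intro γ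
      have hfin : (U j ×ˢ Set.range (mx j) ×ˢ Set.range (mx (up j γ))).Finite :=
        (U_finite j).prod ((range_mx_finite j).prod (range_mx_finite _))
      have := DC_all (k := j) hfin (fun p => {γ' | up j γ' = up j γ →
        Wt g B (up j γ) (γ' * mx j p.2.1) p.2.2 p.1 →
        ∀ ε ∈ F (nl j p.2.1), P2 g B (up j γ) p.2.2 p.1 (B * γ' * mx j p.2.1 * ε)})
        (fun p hp => E_DC hg hBad hB hj _ _ hp.1)
      obtain ⟨δ, h1, h2⟩ := this.2 γ
      refine ⟨δ, h1, fun u hu σ τ' hW ε hε => ?_⟩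
      have h3 := h2 (u, mx j σ, mx (up j γ) τ') ⟨hu, ⟨σ, rfl⟩, ⟨τ', rfl⟩⟩ (up_mul h1)
      have hmm : mx j (mx j σ) = mx j σ := mx_congr (mx_tr j σ)
      dsimp only at h3
      rw [hmm, nl_mx] at h3
      rw [up_mul h1] at hW ⊢
      exact (h3 (Wt_congr (tr_refl _ _) (mx_tr _ _).symm hW) ε hε).congr (mx_tr _ _)) 1
  refine ⟨γ, h1, fun j hj => ?_⟩
  have := h2 1 j hj
  simpa using this

theorem main_aux (hg : Continuous g) (hBad : ∀ w, Bad (g w).1 (g w).2)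
    (hcount : ∀ A, {A' | ∃ w, g w = (A, A')}.Countable) (n : ℕ) (B : SE) :
    ∃ γ ∈ F n, ∀ w α α', g w ≠ (B * γ * α, B * γ * α') := by
  obtain ⟨γ₀, hγ₀, hH⟩ := exists_Hyp hg n B
  obtain ⟨γ, hγ, hE⟩ := exists_E hg hBad hH
  refine ⟨γ₀ * γ, mul_F hγ₀ hγ, fun w₀ α₀ α₀' hw₀ => ?_⟩
  rw [← mul_assoc] at hw₀
  set B₁ := B * γ₀ with hB₁
  set A := B₁ * γ * α₀ with hA
  let K : Set (ℕ → ℕ) := {w | (g w).1 = A ∧ ∃ α', (g w).2 = B₁ * α'}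
  have hclaim : ∀ w ∈ K, ∀ i, ∃ w' ∈ K, (∀ l < i, w' l = w l) ∧ (g w').2 ≠ (g w).2 := by
    rintro w ⟨h1, α', h2⟩ i
    let u := (List.range i).map w
    have hu : ∀ w', Ext u w' ↔ ∀ l < i, w' l = w l := by
      intro w'
      simp only [Ext, u, List.length_map, List.length_range]
      refine forall₂_congr fun l hl => ?_
      rw [List.getD_eq_getElem _ _ (by simpa using hl)]
      simp [eq_comm]
    set j := max n (Encodable.encode u) with hj
    have huj : u ∈ U j := by
      show Encodable.encode u ≤ j
      exact le_max_right _ _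
    obtain ⟨ε, h3, h4⟩ := mx_fac j α₀
    have hW : Wt g B₁ (up j γ) (γ * mx j α₀) α' u := by
      refine ⟨w, γ * α₀, α', (hu w).2 fun _ _ => rfl, tr_up γ (mx_tr j α₀).symm, tr_refl _ _, ?_⟩
      rw [← mul_assoc]
      exact Prod.ext h1 h2
    have := hE j (le_max_left _ _) u huj α₀ α' hW ε h3
    rw [mul_assoc _ (mx j α₀), ← h4] at this
    obtain ⟨w₁, w₂, α₁, α₂, a1, a2, a3, a4, a5, a6, a7⟩ := this
    by_cases hc : B₁ * α₁ = (g w).2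
    · refine ⟨w₂, ⟨by rw [a7], α₂, by rw [a7]⟩, (hu w₂).1 a2, ?_⟩
      rw [a7, ← hc]
      exact fun h => a5 (mul_left_cancel' h).symm
    · exact ⟨w₁, ⟨by rw [a6], α₁, by rw [a6]⟩, (hu w₁).1 a1, by rw [a6]; exact hc⟩
  have hKclosed : IsClosed K := by
    have hK : K = {w | (g w).1 = A} ∩ ⋂ x, {w | (g w).2 x ∈ Set.range B₁.f} := by
      ext w
      simp only [K, Set.mem_setOf_eq, Set.mem_inter_iff, Set.mem_iInter, Set.mem_range]
      refine and_congr_right fun _ => ⟨?_, ?_⟩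
      · rintro ⟨α', h⟩ x
        exact ⟨α' x, by rw [h]; rfl⟩
      · intro h
        exact fac fun x => (h x).imp fun _ h => h.symm
    rw [hK]
    exact (isClosed_eq (by fun_prop) continuous_const).inter
      (isClosed_iInter fun x => (clopen_eval (by fun_prop) x _).isClosed)
  have hpol : PolishSpace K := hKclosed.polishSpace
  have : Nonempty K := ⟨⟨w₀, by rw [hw₀], γ * α₀', by rw [hw₀, mul_assoc]⟩⟩
  let C := {A' | ∃ w, g w = (A, A')}
  have hC : Countable C := (hcount A).to_subtype
  obtain ⟨A', w, hw⟩ := nonempty_interior_of_iUnion_of_closed (X := K)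
    (f := fun A' : C => {w : K | (g w.1).2 = A'.1})
    (fun A' => isClosed_eq (by fun_prop) continuous_const) (by
      ext w
      simp only [Set.mem_iUnion, Set.mem_univ, iff_true]
      refine ⟨⟨(g w.1).2, w.1, ?_⟩, rfl⟩
      exact Prod.ext w.2.1 rfl)
  rw [mem_interior_iff_mem_nhds, nhds_subtype, Filter.mem_comap] at hw
  obtain ⟨V, hV, hV'⟩ := hw
  obtain ⟨O, hOV, hO, hwO⟩ := mem_nhds_iff.1 hV
  rw [PiNat.isOpen_iff_dist] at hO
  obtain ⟨ε, hε, h2⟩ := hO w.1 hwO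
  obtain ⟨i, hi⟩ := exists_pow_lt_of_lt_one hε (by norm_num : (1 / 2 : ℝ) < 1)
  have hin : ∀ w' : K, (∀ l < i, w'.1 l = w.1 l) → (g w'.1).2 = A'.1 := by
    intro w' hw'
    apply hV'
    apply hOV
    apply h2
    refine lt_of_le_of_lt ?_ hi
    rw [← PiNat.mem_cylinder_iff_dist_le, PiNat.mem_cylinder_iff]
    exact fun l hl => (hw' l hl).symm
  obtain ⟨w', hw'K, hw', hne⟩ := hclaim w.1 w.2 i
  exact hne ((hin ⟨w', hw'K⟩ hw').trans (hin w fun _ _ => rfl).symm)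

end
end SE

namespace SE
open MeasureTheory Topology

theorem lv_mem_range (α : SE) : (fun h => ∃ a ∈ Set.range α.f, a.length = h) =
    fun h => h ∈ Set.range α.lv := by
  funext h
  apply propext
  constructor
  · rintro ⟨a, ⟨x, rfl⟩, rfl⟩
    exact ⟨x.length, (α.length_eq x).symm⟩
  · rintro ⟨n, rfl⟩
    exact ⟨_, ⟨List.replicate n false, rfl⟩, rfl⟩

theorem levelOf_range (α : SE) (l : ℕ) : levelOf (Set.range α.f) l = α.lv l := by
  unfold levelOf
  rw [lv_mem_range]
  have hinf : (setOf fun h => h ∈ Set.range α.lv).Infinite :=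
    Set.infinite_range_of_injective α.lv_strictMono.injective
  have h1 := Nat.nth_strictMono hinf
  have h2 := Nat.range_nth_of_infinite hinf
  have h3 : Set.range (Nat.nth fun h => h ∈ Set.range α.lv) = Set.range α.lv := h2
  exact congrFun ((StrictMono.range_inj h1 α.lv_strictMono).1 h3) l

theorem range_strong (α : SE) : IsStrongSubtree (Set.range α.f) := by
  have hlen : ∀ {x : List Bool} {l : ℕ}, (α x).length = α.lv l → x.length = l := by
    intro x l h
    rw [α.length_eq] at h
    exact α.lv_strictMono.injective h
  refine ⟨α.lv, α.lv_strictMono, ?_, ?_, ?_, ?_⟩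
  · rintro _ ⟨x, rfl⟩
    exact ⟨_, α.length_eq x⟩
  · refine ⟨α [], ⟨⟨[], rfl⟩, rfl⟩, ?_⟩
    rintro _ ⟨⟨x, rfl⟩, h⟩
    have := hlen h
    rw [List.length_eq_zero_iff] at this
    rw [this]
  · rintro l _ ⟨x, rfl⟩ h i
    have hx := hlen h
    refine ⟨α (x ++ [i]), ⟨⟨_, rfl⟩, ?_, α.step x i⟩, ?_⟩
    · rw [α.length_eq]; simp [hx]
    · rintro _ ⟨⟨y, rfl⟩, h1, h2⟩
      have hy := hlen h1
      by_contra hne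
      have hne' : y ≠ x ++ [i] := fun h => hne (by rw [h])
      obtain ⟨c, j, h3, h4⟩ := split_diff (by simp [hy, hx]) hne'
      have h5 := α.step_prefix h3
      rcases eq_or_ne c x with rfl | hcx
      · have h6 : (c ++ [!j]) = c ++ [i] := h4.eq_of_length (by simp)
        have h7 : (!j) = i := by simpa using h6
        rw [← h7] at h2
        exact prefix_diff h5 h2
      · have h6 : c ++ [!j] <+: x := by
          rcases List.prefix_concat_iff.1 h4 with h | h
          · exact absurd (List.append_inj' h rfl).1 hcx
          · exact h
        have h7 := α.step_prefix h6
        exact prefix_diff h5 (h7.trans ((List.prefix_append _ _).trans h2))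
  · rintro l _ ⟨y, rfl⟩ h
    have hy := hlen h
    rcases List.eq_nil_or_concat y with rfl | ⟨x, i, rfl⟩
    · simp at hy
    · refine ⟨α x, ⟨x, rfl⟩, ?_, i, ?_⟩
      · rw [α.length_eq]
        congr 1
        simpa using hy
      · rw [List.concat_eq_append]
        exact α.step x i

def rng (α : SE) : Sinf := ⟨Set.range α.f, α.range_strong⟩

theorem rng_inj : Function.Injective rng := by
  intro α β h
  have h' : Set.range α.f = Set.range β.f := congrArg Subtype.val h
  apply eq_of_range
  · intro x
    have : α x ∈ Set.range β.f := h' ▸ ⟨x, rfl⟩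
    obtain ⟨y, hy⟩ := this
    exact ⟨y, hy.symm⟩
  · intro x
    have : β x ∈ Set.range α.f := h' ▸ ⟨x, rfl⟩
    obtain ⟨y, hy⟩ := this
    exact ⟨y, hy.symm⟩

theorem measurable_rng : Measurable rng := by
  refine Measurable.subtype_mk (f := fun α : SE => Set.range α.f) ?_
  rw [measurable_set_iff]
  intro a
  apply measurable_to_prop
  have : ((fun α : SE => a ∈ Set.range α.f) ⁻¹' {True}) =
      ⋃ x : List Bool, {α : SE | (id α) x ∈ ({a} : Set _)} := by
    ext α
    simp
  rw [this]
  exact MeasurableSet.iUnion fun x => (clopen_eval continuous_id x {a}).isOpen.measurableSet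

open Classical in
theorem exists_rng (A : Sinf) : ∃ α : SE, rng α = A := by
  obtain ⟨A, k, hk, hlev, ⟨r, ⟨hr1, hr2⟩, hr3⟩, hsucc, hpred⟩ := A
  let nx : List Bool → Bool → List Bool := fun a i =>
    if h : ∃ b, b ∈ A ∧ (∃ l, a.length = k l ∧ b.length = k (l + 1)) ∧ (a ++ [i]) <+: b
    then h.choose else []
  have hnx : ∀ l a i, a ∈ A → a.length = k l →
      nx a i ∈ A ∧ (nx a i).length = k (l + 1) ∧ (a ++ [i]) <+: nx a i := by
    intro l a i ha hal
    have h : ∃ b, b ∈ A ∧ (∃ l, a.length = k l ∧ b.length = k (l + 1)) ∧ (a ++ [i]) <+: b := by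
      obtain ⟨b, hb, _⟩ := hsucc l a ha hal i
      exact ⟨b, hb.1, ⟨l, hal, hb.2.1⟩, hb.2.2⟩
    have h2 : nx a i = h.choose := dif_pos h
    obtain ⟨h3, ⟨l', h4, h5⟩, h6⟩ := h.choose_spec
    have : l' = l := hk.injective (by rw [← h4, hal])
    subst this
    rw [h2]
    exact ⟨h3, h5, h6⟩
  let f : List Bool → List Bool := fun x => x.foldl nx r
  have hf : ∀ x i, f (x ++ [i]) = nx (f x) i := by
    intro x i
    simp [f]
  have hinv : ∀ x, f x ∈ A ∧ (f x).length = k x.length := by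
    intro x
    induction x using List.reverseRecOn with
    | nil => exact ⟨hr1, hr2⟩
    | append_singleton x i ih =>
      obtain ⟨h1, h2, h3⟩ := hnx _ _ i ih.1 ih.2
      rw [hf]
      exact ⟨h1, by simpa using h2⟩
  have hsurj : ∀ l, ∀ b ∈ A, b.length = k l → ∃ x, f x = b := by
    intro l
    induction l with
    | zero =>
      intro b hb hbl
      exact ⟨[], (hr3 b ⟨hb, hbl⟩).symm⟩
    | succ l ih =>
      intro b hb hbl
      obtain ⟨a, ha, hal, i, hi⟩ := hpred l b hb hbl
      obtain ⟨x, rfl⟩ := ih a ha hal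
      refine ⟨x ++ [i], ?_⟩
      rw [hf]
      exact (hsucc l _ ha hal i).unique (hnx l _ i ha hal) ⟨hb, hbl, hi⟩
  refine ⟨⟨f, fun x y h => by rw [(hinv x).2, (hinv y).2, h], fun x i => ?_⟩, ?_⟩
  · rw [hf]
    exact (hnx _ _ i (hinv x).1 (hinv x).2).2.2
  · apply Subtype.ext
    show Set.range f = A
    ext a
    constructor
    · rintro ⟨x, rfl⟩
      exact (hinv x).1
    · intro ha
      obtain ⟨l, hl⟩ := hlev a ha
      exact hsurj l a ha hl

theorem le_iff {α β : SE} (h : (rng α).1 ⊆ (rng β).1) : ∃ γ, α = β * γ := by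
  apply fac
  intro x
  obtain ⟨y, hy⟩ := h ⟨x, rfl⟩
  exact ⟨y, hy.symm⟩

theorem measurable_Bad : MeasurableSet {p : SE × SE | Bad p.1 p.2} := by
  have : {p : SE × SE | Bad p.1 p.2} = ⋂ K : ℕ, ⋃ z : List Bool,
      ({p : SE × SE | p.2 z ∈ {a : List Bool | K ≤ a.length}} ∩
        ⋂ y : List Bool, {p : SE × SE | p.2 z = p.1 y}ᶜ) := by
    ext p
    simp [Bad]
  rw [this]
  refine MeasurableSet.iInter fun K => MeasurableSet.iUnion fun z => MeasurableSet.inter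
    (clopen_eval continuous_snd z _).isOpen.measurableSet
    (MeasurableSet.iInter fun y => MeasurableSet.compl ?_)
  have : {p : SE × SE | p.2 z = p.1 y} = {p : SE × SE | enc (p.2 z) = enc (p.1 y)} := by
    ext p
    simp
  rw [this]
  exact (isClosed_eq ((continuous_eval z).comp continuous_snd)
    ((continuous_eval y).comp continuous_fst)).measurableSet

theorem main (E : Sinf → Sinf → Prop) (hEquiv : Equivalence E)
    (hBorel : MeasurableSet {p : Sinf × Sinf | E p.1 p.2})
    (hCount : ∀ A : Sinf, {A' : Sinf | E A A'}.Countable) (n : ℕ) (B : SE) :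
    ∃ γ ∈ F n, ∀ α α', E (rng (B * γ * α)) (rng (B * γ * α')) → α = α' := by
  have hZ : MeasurableSet {p : SE × SE | E (rng p.1) (rng p.2) ∧ Bad p.1 p.2} := by
    refine MeasurableSet.inter ?_ measurable_Bad
    exact ((measurable_rng.comp measurable_fst).prodMk (measurable_rng.comp measurable_snd)) hBorel
  have key : ∃ γ ∈ F n, ∀ α α',
      ¬ (E (rng (B * γ * α)) (rng (B * γ * α')) ∧ Bad (B * γ * α) (B * γ * α')) := by
    have hA := hZ.analyticSet
    rw [AnalyticSet] at hA
    rcases hA with h | ⟨g, hg, hr⟩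
    · refine ⟨1, one_F n, fun α α' hc => ?_⟩
      have : (B * 1 * α, B * 1 * α') ∈ {p : SE × SE | E (rng p.1) (rng p.2) ∧ Bad p.1 p.2} := hc
      rw [h] at this
      exact this
    · have hm : ∀ w, E (rng (g w).1) (rng (g w).2) ∧ Bad (g w).1 (g w).2 := by
        intro w
        have : g w ∈ {p : SE × SE | E (rng p.1) (rng p.2) ∧ Bad p.1 p.2} := hr ▸ ⟨w, rfl⟩
        exact this
      obtain ⟨γ, h1, h2⟩ := main_aux hg (fun w => (hm w).2) (fun A => by
        refine ((hCount (rng A)).preimage rng_inj).mono ?_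
        rintro A' ⟨w, hw⟩
        have := (hm w).1
        rw [hw] at this
        exact this) n B
      refine ⟨γ, h1, fun α α' hc => ?_⟩
      have : (B * γ * α, B * γ * α') ∈ Set.range g := by
        rw [hr]
        exact hc
      obtain ⟨w, hw⟩ := this
      exact h2 w α α' hw
  obtain ⟨γ, h1, h2⟩ := key
  refine ⟨γ, h1, fun α α' hE => ?_⟩
  by_contra hne
  rcases bad_or (fun h => hne (mul_left_cancel' (B := B * γ) h)) with h | h
  · exact h2 _ _ ⟨hE, h⟩
  · exact h2 _ _ ⟨hEquiv.symm hE, h⟩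

theorem approx_eq (e γ : SE) {n : ℕ} (hγ : γ ∈ F n) :
    approxT (rng (e * γ)).1 n = approxT (rng e).1 n := by
  have hl : ∀ x : List Bool, x.length < n → (e * γ) x = e x := by
    intro x hx
    rw [mul_apply, hγ x hx]
  have hlv : ∀ l < n, (e * γ).lv l = e.lv l := by
    intro l hl'
    unfold lv
    rw [hl _ (by simpa using hl')]
  have main : ∀ e' : SE, approxT (rng e').1 n = e'.f '' {x | x.length < n} := by
    intro e'
    ext a
    simp only [approxT, rng, levelOf_range]
    constructor
    · rintro ⟨⟨x, rfl⟩, l, hln, hx⟩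
      refine ⟨x, ?_, rfl⟩
      rw [e'.length_eq] at hx
      have := e'.lv_strictMono.injective hx
      show x.length < n
      omega
    · rintro ⟨x, hx, rfl⟩
      exact ⟨⟨x, rfl⟩, x.length, hx, e'.length_eq x⟩
  rw [main, main]
  exact Set.image_congr fun x hx => hl x hx

end SE

/-- Theorem 7.1 (Kanovei-Sabok-Zapletal, for CBERs): every countable Borel equivalence
relation on `S_∞(2^{<ℕ})` coincides with equality below every element of some Ramsey
conull set. -/
theorem milliken_canonizes_CBER_to_equality
    (E : Sinf → Sinf → Prop) (hEquiv : Equivalence E)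
    (hBorel : MeasurableSet {p : Sinf × Sinf | E p.1 p.2})
    (hCount : ∀ A : Sinf, {A' : Sinf | E A A'}.Countable) :
    ∃ D : Set Sinf, RamseyConullT D ∧
      ∀ B ∈ D, ∀ A A' : Sinf, A.1 ⊆ B.1 → A'.1 ⊆ B.1 → (E A A' ↔ A = A') := by
  refine ⟨{B | ∀ A A' : Sinf, A.1 ⊆ B.1 → A'.1 ⊆ B.1 → (E A A' ↔ A = A')}, ?_, fun B hB => hB⟩
  rintro s A ⟨B0, ⟨n, hs⟩, hBA⟩
  obtain ⟨e, rfl⟩ := SE.exists_rng B0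
  obtain ⟨γ, hγ, hmain⟩ := SE.main E hEquiv hBorel hCount n e
  refine ⟨SE.rng (e * γ), ⟨⟨n, ?_⟩, ?_⟩, ?_⟩
  · rw [hs, SE.approx_eq e γ hγ]
  · refine Set.Subset.trans ?_ hBA
    rintro _ ⟨x, rfl⟩
    exact ⟨γ x, rfl⟩
  · apply Set.eq_empty_of_forall_notMem
    rintro C ⟨⟨_, hC⟩, hCD⟩
    apply hCD
    intro X X' hX hX'
    obtain ⟨α, rfl⟩ := SE.exists_rng X
    obtain ⟨α', rfl⟩ := SE.exists_rng X'
    obtain ⟨ε, rfl⟩ := SE.le_iff (hX.trans hC)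
    obtain ⟨ε', rfl⟩ := SE.le_iff (hX'.trans hC)
    constructor
    · intro h
      rw [hmain ε ε' h]
    · intro h
      rw [h]
      exact hEquiv.refl _
end
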